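/- There exists an area-preserving, minimal, C^∞ pseudo-rotation f of T² which has bounded mean motion and super-Liouvillean totally irrational rotation vector, and which is not equicontinuous in the following strong sense: for every ε > 0 there exist x, y ∈ T² with d(x,y) < ε and an integer N > 0 such that d(f^N(x), f^N(y)) ≥ 1/1000. In particular, f is semi-conjugate to an irrational translation via a map homotopic to the identity, but is not topologically conjugate to any translation. -/

import Mathlib

open Filter Topology MeasureTheory

noncomputable section

/-- The plane ℝ². -/
abbrev R2 : Type := ℝ × ℝ

/-- The Euclidean norm on ℝ². -/
def enorm2 (v : R2) : ℝ := Real.sqrt (v.1 ^ 2 + v.2 ^ 2)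

/-- The two-torus 𝕋² = ℝ²/ℤ². -/
abbrev T2 : Type := AddCircle (1 : ℝ) × AddCircle (1 : ℝ)

/-- The covering projection π : ℝ² → 𝕋². -/
def pr2 (v : R2) : T2 := ((v.1 : AddCircle (1 : ℝ)), (v.2 : AddCircle (1 : ℝ)))

/-- The integer vector (v₁, v₂) regarded as a point of ℝ². -/
def intVec (v : ℤ × ℤ) : R2 := ((v.1 : ℝ), (v.2 : ℝ))

/-- The distance on 𝕋² induced by the Euclidean metric on ℝ². -/
def distT2 (x y : T2) : ℝ :=
  sInf {r | ∃ a b : R2, pr2 a = x ∧ pr2 b = y ∧ r = enorm2 (a - b)}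

/-- The C⁰ distance between two maps of 𝕋². -/
def dC0 (f g : T2 → T2) : ℝ := ⨆ x : T2, distT2 (f x) (g x)

/-- `F : ℝ² → ℝ²` is a lift of `f : 𝕋² → 𝕋²`, i.e. π ∘ F = f ∘ π. -/
def IsLift (F : R2 → R2) (f : T2 → T2) : Prop := ∀ z : R2, pr2 (F z) = f (pr2 z)

/-- `F` commutes with the deck transformations of π : ℝ² → 𝕋². -/
def Equivariant (F : R2 → R2) : Prop :=
  ∀ (z : R2) (v : ℤ × ℤ), F (z + intVec v) = F z + intVec v

/-- `f` is a homeomorphism of 𝕋² isotopic to the identity (equivalently, admitting an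
equivariant lift to ℝ²). -/
def IsotopicToId (f : T2 → T2) : Prop :=
  IsHomeomorph f ∧ ∃ F : R2 → R2, IsHomeomorph F ∧ IsLift F f ∧ Equivariant F

/-- The Misiurewicz–Ziemian rotation set of a lift `F`. -/
def rotSet (F : R2 → R2) : Set R2 :=
  {v | ∃ (z : ℕ → R2) (n : ℕ → ℕ), Tendsto n atTop atTop ∧
      Tendsto (fun i => ((n i : ℝ))⁻¹ • (F^[n i] (z i) - z i)) atTop (𝓝 v)}

/-- Bounded mean motion, with bound κ, for a lift `F` with rotation vector `ω`:
‖Fⁿ(z) − z − nω‖ ≤ κ for all z and n. -/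
def BoundedMeanMotion (F : R2 → R2) (ω : R2) (κ : ℝ) : Prop :=
  ∀ (z : R2) (n : ℕ), enorm2 (F^[n] z - z - (n : ℝ) • ω) ≤ κ

/-- The standard scalar product on ℝ². -/
def inner2 (u v : R2) : ℝ := u.1 * v.1 + u.2 * v.2

/-- v^⊥ = (−v₂, v₁)/‖v‖. -/
def perp2 (v : R2) : R2 := (-v.2 / enorm2 v, v.1 / enorm2 v)

/-- Bounded deviation parallel to `v`, with bound κ, for a lift `F` with rotation vector `ω`:
|⟨Fⁿ(z) − z − nω, v^⊥⟩| ≤ κ for all z and n. -/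
def BoundedDeviation (F : R2 → R2) (ω : R2) (v : R2) (κ : ℝ) : Prop :=
  ∀ (z : R2) (n : ℕ), |inner2 (F^[n] z - z - (n : ℝ) • ω) (perp2 v)| ≤ κ

/-- ‖ω‖_{𝕋²} = min over integer vectors z of ‖ω − z‖. -/
def normT2 (ω : R2) : ℝ := ⨅ v : ℤ × ℤ, enorm2 (ω - intVec v)

/-- The super-Liouvillean condition: liminf_{n→∞} n⁻¹ ln ‖nω‖_{𝕋²} = −∞. -/
def SuperLiouville (ω : R2) : Prop :=
  ∀ M : ℝ, ∃ᶠ n : ℕ in atTop, (n : ℝ)⁻¹ * Real.log (normT2 ((n : ℝ) • ω)) < M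

/-- The strong super-Liouvillean condition: liminf_{n→∞} n⁻¹ aⁿ ln ‖nω‖_{𝕋²} = −∞. -/
def StrongSuperLiouville (a : ℝ) (ω : R2) : Prop :=
  ∀ M : ℝ, ∃ᶠ n : ℕ in atTop, (n : ℝ)⁻¹ * a ^ n * Real.log (normT2 ((n : ℝ) • ω)) < M

/-- ω ∈ ℝ² is irrational if ω ∉ ℚ². -/
def IrrationalVec (ω : R2) : Prop := ¬ ∃ q : ℚ × ℚ, ω = ((q.1 : ℝ), (q.2 : ℝ))

/-- ω is totally irrational if ω₁, ω₂, 1 are rationally independent. -/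
def TotallyIrrationalVec (ω : R2) : Prop :=
  ∀ d1 d2 e : ℤ, (d1 : ℝ) * ω.1 + (d2 : ℝ) * ω.2 + (e : ℝ) = 0 → d1 = 0 ∧ d2 = 0 ∧ e = 0

/-- ω is semi-irrational: irrational but not totally irrational. -/
def SemiIrrationalVec (ω : R2) : Prop := IrrationalVec ω ∧ ¬ TotallyIrrationalVec ω

/-- `v` is a character vector of the semi-irrational vector ω. -/
def IsCharacterVector (ω : R2) (v : R2) : Prop :=
  ∃ c d : ℤ, Int.gcd c d = 1 ∧ (∃ e : ℚ, (c : ℝ) * ω.1 + (d : ℝ) * ω.2 + (e : ℝ) = 0) ∧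
    v = ((d : ℝ), (-c : ℝ))

/-- `f` is Hölder continuous with exponent `a`. -/
def HolderMap (a : ℝ) (f : T2 → T2) : Prop :=
  ∃ C : ℝ, ∀ x y : T2, distT2 (f x) (f y) ≤ C * distT2 x y ^ a

/-- C⁰-rigidity: liminf_{n→∞} d_{C⁰}(fⁿ, Id) = 0. -/
def C0Rigid (f : T2 → T2) : Prop :=
  ∀ ε : ℝ, 0 < ε → ∃ᶠ n : ℕ in atTop, dC0 (f^[n]) id < ε

/-- `f` is a C^r diffeomorphism of 𝕋², expressed via a C^r lift with a C^r inverse. -/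
def IsCrDiffeo (r : ℕ∞) (f : T2 → T2) : Prop :=
  ∃ F G : R2 → R2, IsLift F f ∧ Function.LeftInverse G F ∧ Function.RightInverse G F ∧
    ContDiff ℝ r F ∧ ContDiff ℝ r G

/-- C^k-rigidity: some sequence of iterates f^{n_j}, n_j → ∞, converges to the identity in the
C^k topology, i.e. admits lifts converging to the identity uniformly together with all
derivatives of order ≤ k. -/
def CkRigid (k : ℕ∞) (f : T2 → T2) : Prop :=
  ∃ n : ℕ → ℕ, Tendsto n atTop atTop ∧
    ∃ F : ℕ → R2 → R2, (∀ j, IsLift (F j) (f^[n j])) ∧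
      ∀ i : ℕ, (i : ℕ∞) ≤ k →
        Tendsto (fun j => ⨆ z : R2, ‖iteratedFDeriv ℝ i (fun w => F j w - w) z‖)
          atTop (𝓝 0)

/-- ‖x‖_𝕋 : the distance from x ∈ ℝ to the nearest integer. -/
def dT (x : ℝ) : ℝ := |x - round x|

/-- `q` is the sequence of denominators of the best rational approximations of β. -/
def BestDenomSeq (β : ℝ) (q : ℕ → ℕ) : Prop :=
  q 0 = 1 ∧ ∀ n : ℕ,
    q n < q (n + 1) ∧
    (∀ m : ℕ, 1 ≤ m → m < q (n + 1) → dT ((q n : ℝ) * β) ≤ dT ((m : ℝ) * β)) ∧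
    dT ((q n : ℝ) * β) < 1 / (q (n + 1) : ℝ)

/-- β is of non-Brjuno type: Σ_n (ln q_{n+1})/q_n = ∞. -/
def NonBrjunoNum (β : ℝ) : Prop :=
  ∀ q : ℕ → ℕ, BestDenomSeq β q → ¬ Summable fun n => Real.log (q (n + 1) : ℝ) / (q n : ℝ)

/-- Character data of a semi-irrational vector ω: (c,d) ∈ ℤ² with gcd(c,d)=1 and
e = p/q ∈ ℚ in lowest terms with q > 0 such that c ω₁ + d ω₂ + p/q = 0. -/
def IsCharData (ω : R2) (c d p q : ℤ) : Prop :=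
  Int.gcd c d = 1 ∧ Int.gcd p q = 1 ∧ 0 < q ∧
    (c : ℝ) * ω.1 + (d : ℝ) * ω.2 + (p : ℝ) / (q : ℝ) = 0

/-- ω is of strong non-Brjuno type: its character frequency 𝓕(ω̄) is of non-Brjuno type. -/
def StrongNonBrjuno (ω : R2) : Prop :=
  ∃ c d p q a b : ℤ, IsCharData ω c d p q ∧ a * d - b * c = 1 ∧
    NonBrjunoNum (dT ((q : ℝ) * ((a : ℝ) * ω.1 + (b : ℝ) * ω.2)))

/-- The linear action of the integer matrix [[a,b],[c,d]] on ℝ². -/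
def AactZ (a b c d : ℤ) (z : R2) : R2 :=
  ((a : ℝ) * z.1 + (b : ℝ) * z.2, (c : ℝ) * z.1 + (d : ℝ) * z.2)

/-- The operator norm (w.r.t. the Euclidean norm) of the matrix [[a,b],[c,d]]. -/
def AOpNormZ (a b c d : ℤ) : ℝ :=
  sSup {r | ∃ u : R2, enorm2 u ≤ 1 ∧
    r = enorm2 ((a : ℝ) * u.1 + (b : ℝ) * u.2, (c : ℝ) * u.1 + (d : ℝ) * u.2)}

/-- Membership in the class 𝒞_{κ,ω̄}: pseudo-rotations with rotation vector ω̄ mod ℤ²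
having bounded mean motion with bound κ. -/
def MemC (κ : ℝ) (w : T2) (f : T2 → T2) : Prop :=
  IsotopicToId f ∧ ∃ (F : R2 → R2) (ω : R2),
    IsLift F f ∧ rotSet F = {ω} ∧ pr2 ω = w ∧ BoundedMeanMotion F ω κ

/-- Membership in the class 𝒟_{κ,ω̄,v}: pseudo-rotations with rotation vector ω̄ mod ℤ²
having bounded deviation parallel to v with bound κ. -/
def MemD (κ : ℝ) (w : T2) (v : R2) (f : T2 → T2) : Prop :=
  IsotopicToId f ∧ ∃ (F : R2 → R2) (ω : R2),
    IsLift F f ∧ rotSet F = {ω} ∧ pr2 ω = w ∧ BoundedDeviation F ω v κ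

/-- `h : 𝕋² → 𝕋²` is homotopic to the identity (characterised by admitting an equivariant
continuous lift). -/
def HomotopicToIdMap (h : T2 → T2) : Prop :=
  ∃ H : R2 → R2, Continuous H ∧ IsLift H h ∧ Equivariant H

/-- `f` is regularly semi-conjugate to the translation T_w : x ↦ x + w, i.e. semi-conjugate via
a continuous surjection homotopic to the identity. -/
def RegSemiConj (f : T2 → T2) (w : T2) : Prop :=
  ∃ h : T2 → T2, Continuous h ∧ Function.Surjective h ∧ HomotopicToIdMap h ∧
    ∀ x : T2, h (f x) = h x + w

/-- `f` is topologically conjugate to a translation of 𝕋². -/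
def TopLinearizable (f : T2 → T2) : Prop :=
  ∃ (w : T2) (h : T2 → T2), IsHomeomorph h ∧ ∀ x : T2, h (f x) = h x + w

/-- `f` is minimal: every orbit is dense. -/
def MinimalMap (f : T2 → T2) : Prop :=
  ∀ x : T2, Dense (Set.range fun n : ℕ => f^[n] x)

/-- The open ball in 𝕋² for the Euclidean-induced distance. -/
def ballT2 (z : T2) (r : ℝ) : Set T2 := {y | distT2 z y < r}

/-- The diameter of a subset of 𝕋² for the Euclidean-induced distance. -/
def diamT2 (S : Set T2) : ℝ := sSup {r | ∃ x ∈ S, ∃ y ∈ S, r = distT2 x y}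

/-- The Euclidean diameter of a subset of ℝ². -/
def diamE (S : Set R2) : ℝ := sSup {r | ∃ x ∈ S, ∃ y ∈ S, r = enorm2 (x - y)}

/-- `F` is a bounded (measurable) fundamental domain for the ℤ²-action on ℝ². -/
def IsBoundedFundDom (F : Set R2) : Prop :=
  MeasurableSet F ∧ Bornology.IsBounded F ∧
    (∀ x : R2, ∃ v : ℤ × ℤ, x - intVec v ∈ F) ∧
    ∀ v : ℤ × ℤ, v ≠ 0 → F ∩ ((fun x => x + intVec v) '' F) = ∅

/-- `D` is an open topological disc in 𝕋². -/
def IsTopDisc (D : Set T2) : Prop :=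
  IsOpen D ∧ Nonempty (D ≃ₜ Metric.ball (0 : R2) 1)

/-- `D` is simple with respect to the fundamental domain `F`: some connected component of
π⁻¹(D) is contained in `F`. -/
def IsSimpleDisc (D : Set T2) (F : Set R2) : Prop :=
  ∃ x ∈ pr2 ⁻¹' D, connectedComponentIn (pr2 ⁻¹' D) x ⊆ F

/-- `u` is the rotation vector of `g`, defined as the mean displacement
∫_{𝕋²} (g̃(x̃) − x̃) dλ(x) mod ℤ² of an equivariant lift `G` of `g`. -/
def IsRotOf (g : T2 → T2) (u : T2) : Prop :=
  ∃ (G : R2 → R2) (Φ : T2 → R2), Continuous G ∧ IsLift G g ∧ Equivariant G ∧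
    (∀ z : R2, Φ (pr2 z) = G z - z) ∧ u = pr2 (∫ x : T2, Φ x)

/-- The set Γ = ((ℚ×ℝ)/ℤ²) ∪ ((ℝ×ℚ)/ℤ²) of points of 𝕋² with at least one rational
coordinate. -/
def GammaSet : Set T2 :=
  {x | (∃ q : ℚ, x.1 = ((q : ℝ) : AddCircle (1 : ℝ))) ∨
       (∃ q : ℚ, x.2 = ((q : ℝ) : AddCircle (1 : ℝ)))}

/-! ### Torus basics -/

lemma pr2_eq_iff (a b : R2) : pr2 a = pr2 b ↔ ∃ v : ℤ × ℤ, a = b + intVec v := by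
  have key : ∀ x y : ℝ, (x : AddCircle (1:ℝ)) = (y : AddCircle (1:ℝ)) ↔ ∃ k : ℤ, x = y + k := by
    intro x y
    rw [← sub_eq_zero, ← AddCircle.coe_sub, AddCircle.coe_eq_zero_iff]
    constructor
    · rintro ⟨k, hk⟩
      refine ⟨k, ?_⟩
      simp at hk
      linarith
    · rintro ⟨k, hk⟩
      refine ⟨k, ?_⟩
      simp [hk]
  constructor
  · intro h
    have h1 := congrArg Prod.fst h
    have h2 := congrArg Prod.snd h
    obtain ⟨k, hk⟩ := (key _ _).1 h1
    obtain ⟨l, hl⟩ := (key _ _).1 h2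
    exact ⟨(k, l), Prod.ext hk hl⟩
  · rintro ⟨v, rfl⟩
    exact Prod.ext ((key _ _).2 ⟨v.1, rfl⟩) ((key _ _).2 ⟨v.2, rfl⟩)

lemma pr2_add_int (a : R2) (v : ℤ × ℤ) : pr2 (a + intVec v) = pr2 a :=
  (pr2_eq_iff _ _).2 ⟨v, rfl⟩

lemma pr2_add (a b : R2) : pr2 (a + b) = pr2 a + pr2 b := rfl

lemma pr2_quot : IsOpenQuotientMap pr2 := by
  have h : IsOpenQuotientMap (fun x : ℝ => (x : AddCircle (1:ℝ))) :=
    QuotientAddGroup.isOpenQuotientMap_mk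
  exact h.prodMap h

lemma pr2_surj : Function.Surjective pr2 := pr2_quot.surjective

lemma pr2_cont : Continuous pr2 := pr2_quot.continuous

/-- The torus map induced by a plane map. -/
def desc (F : R2 → R2) (x : T2) : T2 := pr2 (F (Function.surjInv pr2_surj x))

lemma desc_lift {F : R2 → R2} (hF : Equivariant F) : IsLift F (desc F) := by
  intro z
  have h : pr2 (Function.surjInv pr2_surj (pr2 z)) = pr2 z := Function.surjInv_eq pr2_surj _
  obtain ⟨v, hv⟩ := (pr2_eq_iff _ _).1 h
  unfold desc
  rw [hv, hF, pr2_add_int]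

lemma desc_cont {F : R2 → R2} (hF : Equivariant F) (hc : Continuous F) : Continuous (desc F) := by
  rw [pr2_quot.isQuotientMap.continuous_iff]
  have : desc F ∘ pr2 = pr2 ∘ F := funext fun z => (desc_lift hF z).symm
  rw [this]
  exact pr2_cont.comp hc

lemma Equivariant.comp {F G : R2 → R2} (hF : Equivariant F) (hG : Equivariant G) :
    Equivariant (F ∘ G) := by
  intro z v
  simp only [Function.comp, hG z v, hF (G z) v]

lemma desc_comp {F G : R2 → R2} (hF : Equivariant F) (hG : Equivariant G) :
    desc (F ∘ G) = desc F ∘ desc G := by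
  funext x
  obtain ⟨z, rfl⟩ := pr2_surj x
  rw [← desc_lift (hF.comp hG), Function.comp, Function.comp, ← desc_lift hG, ← desc_lift hF]

lemma lift_iterate {F : R2 → R2} {f : T2 → T2} (h : IsLift F f) (n : ℕ) (z : R2) :
    f^[n] (pr2 z) = pr2 (F^[n] z) := by
  induction n generalizing z with
  | zero => rfl
  | succ n ih => rw [Function.iterate_succ_apply, Function.iterate_succ_apply, ← h z, ih]

lemma desc_homeo {F G : R2 → R2} (hF : Equivariant F) (hG : Equivariant G)
    (cF : Continuous F) (cG : Continuous G)
    (h1 : ∀ z, G (F z) = z) (h2 : ∀ z, F (G z) = z) : IsHomeomorph (desc F) := by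
  refine (Homeomorph.mk (Equiv.mk (desc F) (desc G) ?_ ?_) (desc_cont hF cF)
    (desc_cont hG cG)).isHomeomorph
  · intro x
    obtain ⟨z, rfl⟩ := pr2_surj x
    rw [← desc_lift hF, ← desc_lift hG, h1]
  · intro x
    obtain ⟨z, rfl⟩ := pr2_surj x
    rw [← desc_lift hG, ← desc_lift hF, h2]

/-! ### Distances -/

lemma enorm2_le (v : R2) : enorm2 v ≤ 2 * ‖v‖ := by
  unfold enorm2
  have h1 : |v.1| ≤ ‖v‖ := norm_fst_le v
  have h2 : |v.2| ≤ ‖v‖ := norm_snd_le v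
  apply Real.sqrt_le_iff.2
  refine ⟨by positivity, ?_⟩
  nlinarith [sq_abs v.1, sq_abs v.2, abs_nonneg v.1, abs_nonneg v.2]

lemma enorm2_nonneg (v : R2) : 0 ≤ enorm2 v := Real.sqrt_nonneg _

lemma abs_fst_le_enorm2 (v : R2) : |v.1| ≤ enorm2 v := by
  apply Real.abs_le_sqrt
  nlinarith [sq_nonneg v.2]

lemma abs_snd_le_enorm2 (v : R2) : |v.2| ≤ enorm2 v := by
  apply Real.abs_le_sqrt
  nlinarith [sq_nonneg v.1]

lemma distT2_le (a b : R2) : distT2 (pr2 a) (pr2 b) ≤ 2 * ‖a - b‖ := by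
  have hb : BddBelow {r | ∃ a' b' : R2, pr2 a' = pr2 a ∧ pr2 b' = pr2 b ∧ r = enorm2 (a' - b')} := by
    refine ⟨0, ?_⟩
    rintro r ⟨a, b, -, -, rfl⟩
    exact enorm2_nonneg _
  exact (csInf_le hb ⟨a, b, rfl, rfl, rfl⟩).trans (enorm2_le _)

lemma circ_norm_le (r : ℝ) : ‖(r : AddCircle (1:ℝ))‖ ≤ |r| := by
  have := AddCircle.norm_eq (1:ℝ) (x := r)
  simp at this
  rw [this]
  simpa using round_le r 0

lemma dist_le_distT2 (x y : T2) : dist x y ≤ distT2 x y := by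
  refine le_csInf ?_ ?_
  · obtain ⟨a, rfl⟩ := pr2_surj x
    obtain ⟨b, rfl⟩ := pr2_surj y
    exact ⟨_, a, b, rfl, rfl, rfl⟩
  · rintro r ⟨a, b, rfl, rfl, rfl⟩
    rw [Prod.dist_eq, max_le_iff, dist_eq_norm, dist_eq_norm]
    constructor
    · refine le_trans ?_ (abs_fst_le_enorm2 _)
      exact circ_norm_le (a-b).1
    · refine le_trans ?_ (abs_snd_le_enorm2 _)
      exact circ_norm_le (a-b).2

lemma circ_rep (x : AddCircle (1:ℝ)) : ∃ r : ℝ, (r : AddCircle (1:ℝ)) = x ∧ |r| = ‖x‖ := by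
  obtain ⟨r, rfl⟩ := QuotientAddGroup.mk_surjective x
  refine ⟨r - round r, ?_, ?_⟩
  · rw [AddCircle.coe_sub, sub_eq_self, AddCircle.coe_eq_zero_iff]
    exact ⟨round r, by simp⟩
  · have := AddCircle.norm_eq (1:ℝ) (x := r)
    simp at this
    exact this.symm

lemma distT2_le_dist (x y : T2) : distT2 x y ≤ 2 * dist x y := by
  obtain ⟨b, rfl⟩ := pr2_surj y
  obtain ⟨r, hr, hr'⟩ := circ_rep (x.1 - (pr2 b).1)
  obtain ⟨s, hs, hs'⟩ := circ_rep (x.2 - (pr2 b).2)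
  have hx : x = pr2 (b + (r, s)) := by
    rw [pr2_add]
    refine Prod.ext ?_ ?_
    · change x.1 = (pr2 b).1 + (r : AddCircle (1:ℝ))
      rw [hr]; abel
    · change x.2 = (pr2 b).2 + (s : AddCircle (1:ℝ))
      rw [hs]; abel
  have h1 := distT2_le (b + (r, s)) b
  rw [← hx] at h1
  refine h1.trans ?_
  rw [Prod.dist_eq, dist_eq_norm, dist_eq_norm, ← hr', ← hs']
  simp [Prod.norm_def]

/-! ### C^k closeness -/

lemma iter_partial {Φ : R2 × R2 → R2} (hΦ : ContDiff ℝ (⊤ : ℕ∞) Φ) (k : ℕ) (t z : R2) :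
    iteratedFDeriv ℝ k (fun z => Φ (t, z)) z =
      (iteratedFDeriv ℝ k Φ (t, z)).compContinuousLinearMap
        (fun _ => ContinuousLinearMap.inr ℝ R2 R2) := by
  have h : (fun z => Φ (t, z)) =
      (fun w => Φ (w + (t, 0))) ∘ (ContinuousLinearMap.inr ℝ R2 R2) := by
    funext z; simp
  rw [h, ContinuousLinearMap.iteratedFDeriv_comp_right (n := ((⊤ : ℕ∞) : WithTop ℕ∞)) _ _ _ (by exact_mod_cast le_top),
    iteratedFDeriv_comp_add_right]
  · simp
  · exact hΦ.comp (contDiff_id.add contDiff_const)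

lemma ck_close {Φ : R2 × R2 → R2} (hΦ : ContDiff ℝ (⊤ : ℕ∞) Φ) (h0 : ∀ z, Φ (0, z) = 0)
    (hp : ∀ t z v, Φ (t, z + intVec v) = Φ (t, z)) (k : ℕ) {ε : ℝ} (hε : 0 < ε) :
    ∀ᶠ t in 𝓝 (0 : R2), ∀ z, ‖iteratedFDeriv ℝ k (fun z => Φ (t, z)) z‖ ≤ ε := by
  have hcont : Continuous fun w : R2 × R2 =>
      ‖iteratedFDeriv ℝ k (fun z => Φ (w.1, z)) w.2‖ := by
    have h1 : Continuous fun w : R2 × R2 => iteratedFDeriv ℝ k Φ w :=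
      hΦ.continuous_iteratedFDeriv (by exact_mod_cast le_top)
    have h2 : Continuous fun w : R2 × R2 =>
        ContinuousMultilinearMap.compContinuousLinearMapL 
        (fun _ : Fin k => ContinuousLinearMap.inr ℝ R2 R2) (iteratedFDeriv ℝ k Φ w) :=
      (ContinuousLinearMap.continuous _).comp h1
    refine h2.norm.congr ?_
    intro w
    rw [iter_partial hΦ]
    rfl
  have hz : ∀ z, ‖iteratedFDeriv ℝ k (fun z => Φ (0, z)) z‖ = 0 := by
    intro z
    have : (fun z => Φ (0, z)) = fun _ => 0 := funext h0
    rw [this]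
    simp
  have hK : IsCompact (Set.Icc (0:ℝ) 1 ×ˢ Set.Icc (0:ℝ) 1) := isCompact_Icc.prod isCompact_Icc
  have := hK.eventually_forall_of_forall_eventually (x₀ := (0 : R2))
    (P := fun t z => ‖iteratedFDeriv ℝ k (fun z => Φ (t, z)) z‖ < ε) (by
      intro z _
      refine (hcont.tendsto (0, z)).eventually (gt_mem_nhds ?_)
      simp only [hz]
      exact hε)
  filter_upwards [this] with t ht z
  have hper : iteratedFDeriv ℝ k (fun z => Φ (t, z)) z =
      iteratedFDeriv ℝ k (fun z => Φ (t, z)) (z + intVec (-⌊z.1⌋, -⌊z.2⌋)) := by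
    rw [← iteratedFDeriv_comp_add_right]
    simp only [hp]
  rw [hper]
  refine (ht _ ⟨⟨?_, ?_⟩, ⟨?_, ?_⟩⟩).le
  · have := Int.floor_le z.1
    simp [intVec]; linarith
  · have := (Int.lt_floor_add_one z.1).le
    simp [intVec]; linarith
  · have := Int.floor_le z.2
    simp [intVec]; linarith
  · have := (Int.lt_floor_add_one z.2).le
    simp [intVec]; linarith

/-- The error scale. -/
def ep (n : ℕ) : ℝ := (1 / 100) * (1 / 2) ^ n

lemma ep_pos (n : ℕ) : 0 < ep n := by unfold ep; positivity

lemma ep_succ (n : ℕ) : 2 * ep (n + 1) = ep n := by unfold ep; ring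

lemma ep_zero : ep 0 = 1 / 100 := by unfold ep; norm_num

lemma ep_summable : Summable ep :=
  (summable_geometric_of_lt_one (by norm_num) (by norm_num)).mul_left _

lemma ep_tendsto : Tendsto ep atTop (𝓝 0) := ep_summable.tendsto_atTop_zero

lemma ep_anti {m n : ℕ} (h : m ≤ n) : ep n ≤ ep m := by
  unfold ep
  have : ((1:ℝ) / 2) ^ n ≤ (1 / 2) ^ m := pow_le_pow_of_le_one (by norm_num) (by norm_num) h
  linarith

/-- Telescoping: finite version. -/
lemma tele_fin {E : Type*} [NormedAddCommGroup E] (u : ℕ → E) (n : ℕ)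
    (h : ∀ k ≥ n, ‖u (k + 1) - u k‖ ≤ ep k) (m : ℕ) (hm : n ≤ m) :
    ‖u m - u n‖ ≤ 2 * ep n - 2 * ep m := by
  induction m, hm using Nat.le_induction with
  | base => simp
  | succ m hm ih =>
    have h1 := h m hm
    have h2 := ep_succ m
    have : u (m + 1) - u n = (u (m + 1) - u m) + (u m - u n) := by abel
    rw [this]
    refine (norm_add_le _ _).trans ?_
    linarith

lemma tele_lim {E : Type*} [NormedAddCommGroup E] {u : ℕ → E} {l : E} (n : ℕ)
    (h : ∀ k ≥ n, ‖u (k + 1) - u k‖ ≤ ep k) (hl : Tendsto u atTop (𝓝 l)) :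
    ‖l - u n‖ ≤ 2 * ep n := by
  refine le_of_tendsto ((hl.sub_const (u n)).norm) ?_
  filter_upwards [eventually_ge_atTop n] with m hm
  have := tele_fin u n h m hm
  have := ep_pos m
  linarith

lemma tele_exists {E : Type*} [NormedAddCommGroup E] [CompleteSpace E] {u : ℕ → E} (n : ℕ)
    (h : ∀ k ≥ n, ‖u (k + 1) - u k‖ ≤ ep k) : ∃ l, Tendsto u atTop (𝓝 l) := by
  have : ∃ l, Tendsto (fun k => u (k + n)) atTop (𝓝 l) := by
    apply cauchySeq_tendsto_of_complete
    refine cauchySeq_of_dist_le_of_summable ep (fun k => ?_) ep_summable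
    rw [dist_comm, dist_eq_norm]
    have h1 := h (k + n) (by omega)
    have h2 : ep (k + n) ≤ ep k := ep_anti (by omega)
    rw [show k.succ + n = k + n + 1 by omega]
    exact h1.trans h2
  obtain ⟨l, hl⟩ := this
  exact ⟨l, (tendsto_add_atTop_iff_nat n).1 hl⟩

lemma smooth_limit {G : ℕ → R2 → R2} {F : R2 → R2} (hG : ∀ n, ContDiff ℝ (⊤ : ℕ∞) (G n))
    (h : ∀ n, ∀ k ≤ n, ∀ z, ‖iteratedFDeriv ℝ k (fun z => G (n + 1) z - G n z) z‖ ≤ ep n)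
    (hF : ∀ z, Tendsto (fun n => G n z) atTop (𝓝 (F z))) : ContDiff ℝ (⊤ : ℕ∞) F := by
  have h1 : ContDiff ℝ (⊤ : ℕ∞) fun z => ∑' n, (G (n + 1) z - G n z) := by
    refine contDiff_tsum_of_eventually (v := fun _ => ep) (N := (⊤ : ℕ∞)) ?_ ?_ ?_
    · intro i
      exact (hG (i+1)).sub (hG i)
    · intro k _
      exact ep_summable
    · intro k _
      rw [Nat.cofinite_eq_atTop]
      filter_upwards [eventually_ge_atTop k] with n hn x
      exact h n k hn x
  have h2 : F = fun z => G 0 z + ∑' n, (G (n + 1) z - G n z) := by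
    funext z
    have hs : Summable fun n => G (n + 1) z - G n z := by
      refine Summable.of_norm_bounded ep_summable fun n => ?_
      have := h n 0 (Nat.zero_le _) z
      rwa [norm_iteratedFDeriv_zero] at this
    have ht := hs.hasSum.tendsto_sum_nat
    simp only [Finset.sum_range_sub (fun n => G n z)] at ht
    have := tendsto_nhds_unique ht ((hF z).sub_const _)
    rw [this]; abel
  rw [h2]
  exact (hG 0).add h1

lemma mp_limit {f : T2 → T2} {g : ℕ → T2 → T2} (hf : Continuous f)
    (hg : ∀ n, MeasurePreserving (g n) (volume : Measure T2) volume)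
    (hgc : ∀ n, Continuous (g n))
    (h : ∀ x, Tendsto (fun n => g n x) atTop (𝓝 (f x))) :
    MeasurePreserving f (volume : Measure T2) volume := by
  refine ⟨hf.measurable, ?_⟩
  have : IsFiniteMeasure (Measure.map f (volume : Measure T2)) :=
    Measure.isFiniteMeasure_map _ _
  apply MeasureTheory.ext_of_forall_integral_eq_of_IsFiniteMeasure
  intro φ
  rw [integral_map hf.measurable.aemeasurable φ.continuous.aestronglyMeasurable]
  have h1 : Tendsto (fun n => ∫ x : T2, φ (g n x)) atTop (𝓝 (∫ x : T2, φ (f x))) := by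
    refine tendsto_integral_of_dominated_convergence (fun _ => ‖φ‖) ?_ ?_ ?_ ?_
    · intro n
      exact (φ.continuous.comp (hgc n)).aestronglyMeasurable
    · exact integrable_const _
    · intro n
      exact Eventually.of_forall fun x => φ.norm_coe_le_norm _
    · exact Eventually.of_forall fun x => (φ.continuous.tendsto _).comp (h x)
  have h2 : ∀ n, ∫ x : T2, φ (g n x) = ∫ x : T2, φ x := by
    intro n
    conv_rhs => rw [← (hg n).map_eq]
    rw [integral_map (hgc n).measurable.aemeasurable φ.continuous.aestronglyMeasurable]
  simp only [h2] at h1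
  exact (tendsto_nhds_unique tendsto_const_nhds h1).symm

/-! ### Shears -/

/-- Horizontal shear. -/
def shU (a : ℝ) (n : ℕ) (z : R2) : R2 := (z.1 + a * Real.sin (2 * Real.pi * n * z.2), z.2)

/-- Vertical shear. -/
def shV (a : ℝ) (n : ℕ) (z : R2) : R2 := (z.1, z.2 + a * Real.sin (2 * Real.pi * n * z.1))

lemma sin_shift {n : ℕ} {w : ℝ} (h : ∃ j : ℤ, (n : ℝ) * w = j) (x : ℝ) :
    Real.sin (2 * Real.pi * n * (x + w)) = Real.sin (2 * Real.pi * n * x) := by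
  obtain ⟨j, hj⟩ := h
  have : 2 * Real.pi * n * (x + w) = 2 * Real.pi * n * x + j * (2 * Real.pi) := by
    rw [← hj]; ring
  rw [this, Real.sin_add_int_mul_two_pi]

lemma shU_add (a : ℝ) {n : ℕ} {w : R2} (h : ∃ j : ℤ, (n : ℝ) * w.2 = j) (z : R2) :
    shU a n (z + w) = shU a n z + w := by
  simp only [shU, Prod.fst_add, Prod.snd_add, sin_shift h]
  ext <;> simp
  ring

lemma shV_add (a : ℝ) {n : ℕ} {w : R2} (h : ∃ j : ℤ, (n : ℝ) * w.1 = j) (z : R2) :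
    shV a n (z + w) = shV a n z + w := by
  simp only [shV, Prod.fst_add, Prod.snd_add, sin_shift h]
  ext <;> simp
  ring

lemma shU_eq (a : ℝ) (n : ℕ) : Equivariant (shU a n) := fun z v =>
  shU_add a ⟨n * v.2, by simp [intVec]⟩ z

lemma shV_eq (a : ℝ) (n : ℕ) : Equivariant (shV a n) := fun z v =>
  shV_add a ⟨n * v.1, by simp [intVec]⟩ z

lemma shU_inv (a : ℝ) (n : ℕ) (z : R2) : shU (-a) n (shU a n z) = z := by
  ext <;> simp [shU]

lemma shV_inv (a : ℝ) (n : ℕ) (z : R2) : shV (-a) n (shV a n z) = z := by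
  ext <;> simp [shV]

lemma shU_smooth (a : ℝ) (n : ℕ) : ContDiff ℝ (⊤ : ℕ∞) (shU a n) := by
  unfold shU
  exact (contDiff_fst.add (contDiff_const.mul
    (Real.contDiff_sin.comp (contDiff_const.mul contDiff_snd)))).prodMk contDiff_snd

lemma shV_smooth (a : ℝ) (n : ℕ) : ContDiff ℝ (⊤ : ℕ∞) (shV a n) := by
  unfold shV
  exact contDiff_fst.prodMk (contDiff_snd.add (contDiff_const.mul
    (Real.contDiff_sin.comp (contDiff_const.mul contDiff_fst))))

lemma shU_near (a : ℝ) (n : ℕ) (z : R2) : ‖shU a n z - z‖ ≤ |a| := by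
  rw [Prod.norm_def]
  simp only [shU, Prod.fst_sub, Prod.snd_sub, add_sub_cancel_left, sub_self, norm_zero,
    max_le_iff, abs_nonneg, and_true, Real.norm_eq_abs, abs_mul]
  exact mul_le_of_le_one_right (abs_nonneg a) (Real.abs_sin_le_one _)

lemma shV_near (a : ℝ) (n : ℕ) (z : R2) : ‖shV a n z - z‖ ≤ |a| := by
  rw [Prod.norm_def]
  simp only [shV, Prod.fst_sub, Prod.snd_sub, add_sub_cancel_left, sub_self, norm_zero,
    max_le_iff, abs_nonneg, true_and, Real.norm_eq_abs, abs_mul]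
  exact mul_le_of_le_one_right (abs_nonneg a) (Real.abs_sin_le_one _)

lemma shU_neg (a : ℝ) (n : ℕ) (z : R2) : shU a n (-z) = -shU a n z := by
  ext <;> simp [shU]
  ring

lemma shV_neg (a : ℝ) (n : ℕ) (z : R2) : shV a n (-z) = -shV a n z := by
  ext <;> simp [shV]
  ring

/-- The function on the circle used for the shears. -/
lemma exists_circ (a : ℝ) (n : ℕ) : ∃ φ : AddCircle (1:ℝ) → AddCircle (1:ℝ), Continuous φ ∧
    ∀ x : ℝ, φ (x : AddCircle (1:ℝ)) =
      ((a * Real.sin (2 * Real.pi * n * x) : ℝ) : AddCircle (1:ℝ)) := by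
  have hp : Function.Periodic (fun x : ℝ =>
      ((a * Real.sin (2 * Real.pi * n * x) : ℝ) : AddCircle (1:ℝ))) 1 := by
    intro x
    simp only
    rw [sin_shift ⟨n, by simp⟩]
  refine ⟨hp.lift, ?_, fun x => hp.lift_coe x⟩
  have hq : IsOpenQuotientMap (fun x : ℝ => (x : AddCircle (1:ℝ))) :=
    QuotientAddGroup.isOpenQuotientMap_mk
  rw [hq.isQuotientMap.continuous_iff]
  have : Continuous (fun x : ℝ =>
      ((a * Real.sin (2 * Real.pi * n * x) : ℝ) : AddCircle (1:ℝ))) :=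
    hq.continuous.comp (by fun_prop)
  exact this

lemma skew_mp {φ : AddCircle (1:ℝ) → AddCircle (1:ℝ)} (hφ : Continuous φ) :
    MeasurePreserving (fun x : T2 => ((x.1, x.2 + φ x.1) : T2)) volume volume := by
  refine MeasurePreserving.skew_product (MeasurePreserving.id _)
    (g := fun x y => y + φ x) ?_ ?_
  · exact (by fun_prop : Continuous fun p : AddCircle (1:ℝ) × AddCircle (1:ℝ) =>
      p.2 + φ p.1).measurable
  · exact Eventually.of_forall fun x => map_add_right_eq_self _ _

lemma shV_mp (a : ℝ) (n : ℕ) : MeasurePreserving (desc (shV a n)) volume volume := by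
  obtain ⟨φ, hφ, h⟩ := exists_circ a n
  convert skew_mp hφ using 1
  funext x
  obtain ⟨z, rfl⟩ := pr2_surj x
  rw [← desc_lift (shV_eq a n)]
  simp [pr2, shV, h]

lemma shU_mp (a : ℝ) (n : ℕ) : MeasurePreserving (desc (shU a n)) volume volume := by
  obtain ⟨φ, hφ, h⟩ := exists_circ a n
  have hs : MeasurePreserving (Prod.swap : T2 → T2) volume volume :=
    Measure.measurePreserving_swap
  convert hs.comp ((skew_mp hφ).comp hs) using 1
  funext x
  obtain ⟨z, rfl⟩ := pr2_surj x
  rw [← desc_lift (shU_eq a n)]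
  simp [pr2, shU, h]

lemma trans_eq (w : R2) : Equivariant (fun z => z + w) := fun z v => by
  simp only; abel

lemma trans_mp (w : R2) : MeasurePreserving (desc (fun z => z + w)) volume volume := by
  have : (volume : Measure T2).IsAddRightInvariant :=
    inferInstanceAs ((volume : Measure (AddCircle (1:ℝ))).prod volume).IsAddRightInvariant
  convert measurePreserving_add_right (volume : Measure T2) (pr2 w) using 1
  funext x
  obtain ⟨z, rfl⟩ := pr2_surj x
  rw [← desc_lift (trans_eq w), pr2_add]

/-! ### The inductive construction -/

/-- Data at one stage of the construction. -/
structure St where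
  q : ℕ
  H : R2 → R2
  K : R2 → R2
  w : R2

/-- Invariants of a stage. -/
structure StInv (s : St) : Prop where
  qpos : 0 < s.q
  HK : ∀ z, s.H (s.K z) = z
  KH : ∀ z, s.K (s.H z) = z
  sH : ContDiff ℝ (⊤ : ℕ∞) s.H
  sK : ContDiff ℝ (⊤ : ℕ∞) s.K
  eH : Equivariant s.H
  eK : Equivariant s.K
  mH : MeasurePreserving (desc s.H) (volume : Measure T2) volume
  mK : MeasurePreserving (desc s.K) (volume : Measure T2) volume
  rat : ∃ v : ℤ × ℤ, (s.q : ℝ) • s.w = intVec v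
  odd : ∀ z, s.H (-z) = -s.H z

/-- The increment of the rotation vector. -/
def St.inc (s : St) (m : ℕ) : R2 := (1 / (s.q * m), 1 / (s.q * m ^ 2))

/-- The next stage. -/
def St.next (s : St) (m : ℕ) : St where
  q := s.q * m ^ 2
  H := s.H ∘ shV (1 / (4 * s.q)) (s.q * m ^ 2) ∘
    shU (1 / (4 * (s.q * m ^ 2 : ℕ))) (s.q * m ^ 2)
  K := shU (-(1 / (4 * (s.q * m ^ 2 : ℕ)))) (s.q * m ^ 2) ∘
    shV (-(1 / (4 * s.q))) (s.q * m ^ 2) ∘ s.K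
  w := s.w + s.inc m

lemma id_equiv : Equivariant (id : R2 → R2) := fun _ _ => rfl

lemma desc_id : desc (id : R2 → R2) = id := by
  funext x
  obtain ⟨z, rfl⟩ := pr2_surj x
  rw [← desc_lift id_equiv]
  rfl

/-- The initial stage. -/
def St.init : St := ⟨1, id, id, 0⟩

lemma inv_init : StInv St.init where
  qpos := Nat.one_pos
  HK _ := rfl
  KH _ := rfl
  sH := contDiff_id
  sK := contDiff_id
  eH := id_equiv
  eK := id_equiv
  mH := by
    change MeasurePreserving (desc id) _ _
    rw [desc_id]; exact MeasurePreserving.id _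
  mK := by
    change MeasurePreserving (desc id) _ _
    rw [desc_id]; exact MeasurePreserving.id _
  rat := ⟨0, by ext <;> simp [St.init, intVec]⟩
  odd _ := rfl

lemma shU_inv' (a : ℝ) (n : ℕ) (z : R2) : shU a n (shU (-a) n z) = z := by
  simpa using shU_inv (-a) n z

lemma shV_inv' (a : ℝ) (n : ℕ) (z : R2) : shV a n (shV (-a) n z) = z := by
  simpa using shV_inv (-a) n z

lemma inv_next {s : St} (h : StInv s) {m : ℕ} (hm : 0 < m) : StInv (s.next m) where
  qpos := Nat.mul_pos h.qpos (by positivity)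
  HK z := by simp only [St.next, Function.comp, shU_inv', shV_inv', h.HK]
  KH z := by simp only [St.next, Function.comp, shU_inv, shV_inv, h.KH]
  sH := h.sH.comp ((shV_smooth _ _).comp (shU_smooth _ _))
  sK := (shU_smooth _ _).comp ((shV_smooth _ _).comp h.sK)
  eH := h.eH.comp ((shV_eq _ _).comp (shU_eq _ _))
  eK := (shU_eq _ _).comp ((shV_eq _ _).comp h.eK)
  mH := by
    simp only [St.next]
    rw [desc_comp h.eH ((shV_eq _ _).comp (shU_eq _ _)), desc_comp (shV_eq _ _) (shU_eq _ _)]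
    exact h.mH.comp ((shV_mp _ _).comp (shU_mp _ _))
  mK := by
    simp only [St.next]
    rw [desc_comp (shU_eq _ _) ((shV_eq _ _).comp h.eK), desc_comp (shV_eq _ _) h.eK]
    exact (shU_mp _ _).comp ((shV_mp _ _).comp h.mK)
  rat := by
    obtain ⟨v, hv⟩ := h.rat
    have hq : (s.q : ℝ) ≠ 0 := by exact_mod_cast h.qpos.ne'
    have hm' : (m : ℝ) ≠ 0 := by exact_mod_cast hm.ne'
    refine ⟨(m ^ 2 * v.1 + m, m ^ 2 * v.2 + 1), ?_⟩
    have h1 : (s.q : ℝ) * s.w.1 = v.1 := congrArg Prod.fst hv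
    have h2 : (s.q : ℝ) * s.w.2 = v.2 := congrArg Prod.snd hv
    ext
    · simp [St.next, St.inc, intVec, ← h1]
      field_simp
    · simp [St.next, St.inc, intVec, ← h2]
      field_simp
  odd z := by simp only [St.next, Function.comp, shU_neg, shV_neg, h.odd]

lemma next_conj (s : St) (m : ℕ) (u : R2)
    (hu : ∃ v : ℤ × ℤ, ((s.next m).q : ℝ) • u = intVec v) (z : R2) :
    (s.next m).H ((s.next m).K z + u) = s.H (s.K z + u) := by
  obtain ⟨v, hv⟩ := hu
  have h1 : ((s.q * m ^ 2 : ℕ) : ℝ) * u.1 = v.1 := congrArg Prod.fst hv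
  have h2 : ((s.q * m ^ 2 : ℕ) : ℝ) * u.2 = v.2 := congrArg Prod.snd hv
  simp only [St.next, Function.comp]
  rw [shU_add _ ⟨v.2, h2⟩, shV_add _ ⟨v.1, h1⟩, shU_inv', shV_inv']

lemma next_K_near (s : St) (m : ℕ) (hq : 0 < s.q) (hm : 0 < m) (z : R2) :
    ‖(s.next m).K z - s.K z‖ ≤ 1 / s.q := by
  simp only [St.next, Function.comp]
  set a : ℝ := -(1 / (4 * s.q)) with ha
  set b : ℝ := -(1 / (4 * (s.q * m ^ 2 : ℕ))) with hb
  have hq' : (1:ℝ) ≤ s.q := by exact_mod_cast hq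
  have hm' : (1:ℝ) ≤ m := by exact_mod_cast hm
  have h1 := shU_near b (s.q * m ^ 2) (shV a (s.q * m ^ 2) (s.K z))
  have h2 := shV_near a (s.q * m ^ 2) (s.K z)
  have ha' : |a| = (1 / 4) * (1 / s.q) := by
    rw [ha, abs_neg, abs_of_pos (by positivity)]; field_simp
  have hb' : |b| ≤ (1 / 4) * (1 / s.q) := by
    rw [hb, abs_neg, abs_of_pos (by positivity)]
    have : (1:ℝ) / (4 * (s.q * m ^ 2 : ℕ)) ≤ 1 / (4 * s.q) := by
      apply one_div_le_one_div_of_le (by positivity)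
      push_cast
      have : (s.q : ℝ) * 1 ≤ s.q * m ^ 2 := by gcongr; exact one_le_pow₀ hm'
      linarith
    refine this.trans (le_of_eq ?_)
    field_simp
  have h3 := norm_sub_le_norm_sub_add_norm_sub
    (shU b (s.q * m ^ 2) (shV a (s.q * m ^ 2) (s.K z))) (shV a (s.q * m ^ 2) (s.K z)) (s.K z)
  have h4 : (0:ℝ) < 1 / s.q := by positivity
  linarith

/-- The requirements on the parameter `m` at stage `n`. -/
structure Good (n : ℕ) (s : St) (m : ℕ) : Prop where
  two : 2 ≤ m
  ck : ∀ k ≤ n, ∀ z, ‖iteratedFDeriv ℝ k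
    (fun z => s.H (s.K z + (s.w + s.inc m)) - s.H (s.K z + s.w)) z‖ ≤ ep n
  ck' : ∀ k ≤ n, ∀ z, ‖iteratedFDeriv ℝ k
    (fun z => s.H (s.K z + -(s.w + s.inc m)) - s.H (s.K z + -s.w)) z‖ ≤ ep n
  it : ∀ N : ℕ, N ≤ s.q → ∀ z,
    ‖s.H (z + (N : ℝ) • (s.w + s.inc m)) - s.H (z + (N : ℝ) • s.w)‖ ≤ ep n
  unif : ∀ a b, ‖a - b‖ ≤ 4 / m → ‖s.H a - s.H b‖ ≤ ep n
  liou : Real.exp (n * s.q) * s.q * ‖s.inc m‖ ≤ ep n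
  mbig : 1 / (m : ℝ) ≤ ep (n + 1)
  qbig : 1 / ((s.next m).q : ℝ) ≤ ep (n + 1)

lemma inc_norm {s : St} (hq : 0 < s.q) {m : ℕ} (hm : 0 < m) : ‖s.inc m‖ ≤ 1 / m := by
  have hq' : (1:ℝ) ≤ s.q := by exact_mod_cast hq
  have hm' : (1:ℝ) ≤ m := by exact_mod_cast hm
  rw [Prod.norm_def, max_le_iff]
  simp only [St.inc, Real.norm_eq_abs]
  rw [abs_of_pos (by positivity), abs_of_pos (by positivity)]
  constructor
  · apply one_div_le_one_div_of_le (by positivity)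
    nlinarith
  · apply one_div_le_one_div_of_le (by positivity)
    have : (m : ℝ) * 1 ≤ m ^ 2 := by nlinarith
    nlinarith

lemma one_div_tendsto : Tendsto (fun m : ℕ => (1:ℝ) / m) atTop (𝓝 0) :=
  tendsto_one_div_atTop_nhds_zero_nat

lemma inc_tendsto {s : St} (hq : 0 < s.q) : Tendsto (fun m => s.inc m) atTop (𝓝 0) := by
  rw [tendsto_zero_iff_norm_tendsto_zero]
  refine squeeze_zero' (Eventually.of_forall fun _ => norm_nonneg _) ?_ one_div_tendsto
  filter_upwards [eventually_gt_atTop 0] with m hm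
  exact inc_norm hq hm

lemma inv_ck {s : St} (h : StInv s) (u : R2) (k : ℕ) {ε : ℝ} (hε : 0 < ε) :
    ∀ᶠ t in 𝓝 (0 : R2), ∀ z, ‖iteratedFDeriv ℝ k
      (fun z => s.H (s.K z + (u + t)) - s.H (s.K z + u)) z‖ ≤ ε := by
  refine ck_close (Φ := fun p : R2 × R2 => s.H (s.K p.2 + (u + p.1)) - s.H (s.K p.2 + u))
    ?_ ?_ ?_ k hε
  · have h1 : ContDiff ℝ (⊤ : ℕ∞) fun p : R2 × R2 => s.K p.2 := h.sK.comp contDiff_snd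
    exact (h.sH.comp (h1.add (contDiff_const.add contDiff_fst))).sub
      (h.sH.comp (h1.add contDiff_const))
  · intro z; simp
  · intro t z v
    simp only
    rw [h.eK, add_right_comm, h.eH, add_right_comm, h.eH]
    abel

lemma inv_unif {s : St} (h : StInv s) {ε : ℝ} (hε : 0 < ε) :
    ∃ δ > 0, ∀ a b, ‖a - b‖ < δ → ‖s.H a - s.H b‖ ≤ ε := by
  have h1 := ck_close (Φ := fun p : R2 × R2 => s.H (p.2 + p.1) - s.H p.2) ?_ ?_ ?_ 0 hε
  · obtain ⟨δ, hδ, h2⟩ := Metric.eventually_nhds_iff.1 h1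
    refine ⟨δ, hδ, fun a b hab => ?_⟩
    have := h2 (y := a - b) (by simpa using hab) b
    rw [norm_iteratedFDeriv_zero] at this
    simpa using this
  · exact (h.sH.comp (contDiff_snd.add contDiff_fst)).sub (h.sH.comp contDiff_snd)
  · intro z; simp
  · intro t z v
    simp only
    rw [add_right_comm, h.eH, h.eH]
    abel

lemma good_exists {s : St} (h : StInv s) (n : ℕ) : ∃ m, Good n s m := by
  have hit := inc_tendsto h.qpos
  have hnit : Tendsto (fun m => -s.inc m) atTop (𝓝 0) := by simpa using hit.neg
  have hck : ∀ᶠ m in atTop, ∀ k ∈ Finset.range (n + 1), ∀ z, ‖iteratedFDeriv ℝ k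
      (fun z => s.H (s.K z + (s.w + s.inc m)) - s.H (s.K z + s.w)) z‖ ≤ ep n := by
    rw [eventually_all_finset]
    intro k _
    exact hit.eventually (inv_ck h s.w k (ep_pos n))
  have hck' : ∀ᶠ m in atTop, ∀ k ∈ Finset.range (n + 1), ∀ z, ‖iteratedFDeriv ℝ k
      (fun z => s.H (s.K z + (-s.w + -s.inc m)) - s.H (s.K z + -s.w)) z‖ ≤ ep n := by
    rw [eventually_all_finset]
    intro k _
    exact hnit.eventually (inv_ck h (-s.w) k (ep_pos n))
  obtain ⟨δ, hδ, hu⟩ := inv_unif h (ep_pos n)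
  have hun : ∀ᶠ m : ℕ in atTop, (4:ℝ) / m < δ := by
    have : Tendsto (fun m : ℕ => (4:ℝ) / m) atTop (𝓝 0) := tendsto_const_div_atTop_nhds_zero_nat 4
    exact this.eventually (gt_mem_nhds hδ)
  have hitn : ∀ᶠ m : ℕ in atTop, (s.q : ℝ) * ‖s.inc m‖ < δ := by
    have : Tendsto (fun m : ℕ => (s.q : ℝ) * ‖s.inc m‖) atTop (𝓝 0) := by
      simpa using hit.norm.const_mul (s.q : ℝ)
    exact this.eventually (gt_mem_nhds hδ)
  have hl : ∀ᶠ m : ℕ in atTop, Real.exp (n * s.q) * s.q * ‖s.inc m‖ < ep n := by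
    have : Tendsto (fun m : ℕ => Real.exp (n * s.q) * s.q * ‖s.inc m‖) atTop (𝓝 0) := by
      simpa using hit.norm.const_mul (Real.exp (n * s.q) * s.q)
    exact this.eventually (gt_mem_nhds (ep_pos n))
  have hqb : ∀ᶠ m : ℕ in atTop, (1:ℝ) / m < ep (n + 1) :=
    one_div_tendsto.eventually (gt_mem_nhds (ep_pos _))
  obtain ⟨m, h1, h2, h3, h4, h5, h6, h7⟩ := (hck.and (hck'.and (hun.and (hitn.and (hl.and
    (hqb.and (eventually_ge_atTop 2))))))).exists
  refine ⟨m, h7, ?_, ?_, ?_, ?_, h5.le, h6.le, ?_⟩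
  · intro k hk
    exact h1 k (by simpa using Nat.lt_succ_of_le hk)
  · intro k hk
    simp only [neg_add]
    exact h2 k (by simpa using Nat.lt_succ_of_le hk)
  · intro N hN z
    apply hu
    have : z + (N : ℝ) • (s.w + s.inc m) - (z + (N : ℝ) • s.w) = (N : ℝ) • s.inc m := by
      rw [smul_add]; abel
    rw [this, norm_smul]
    refine lt_of_le_of_lt ?_ h4
    have : (N : ℝ) ≤ s.q := by exact_mod_cast hN
    simp only [Real.norm_natCast]
    gcongr
  · intro a b hab
    exact hu a b (hab.trans_lt h3)
  · refine le_trans ?_ h6.le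
    have hq' : (1:ℝ) ≤ s.q := by exact_mod_cast h.qpos
    have hm' : (1:ℝ) ≤ m := by exact_mod_cast (by omega : 1 ≤ m)
    apply one_div_le_one_div_of_le (by positivity)
    simp only [St.next]
    push_cast
    nlinarith [sq_nonneg (m:ℝ), mul_le_mul hq' (by nlinarith : (m:ℝ) ≤ m ^ 2) (by linarith) (by linarith)]

lemma density {s : St} (h : StInv s) {m : ℕ} (hm : 0 < m) (τ : R2) :
    ∃ N : ℕ, 0 < N ∧ N ≤ (s.next m).q ∧ ∃ v : ℤ × ℤ,
      ‖(N : ℝ) • (s.next m).w - (τ + intVec v)‖ ≤ 2 / m := by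
  obtain ⟨p, hp⟩ := h.rat
  have hp1 : (s.q : ℝ) * s.w.1 = p.1 := congrArg Prod.fst hp
  have hp2 : (s.q : ℝ) * s.w.2 = p.2 := congrArg Prod.snd hp
  have hq : (0:ℝ) < s.q := by exact_mod_cast h.qpos
  have hm' : (0:ℝ) < m := by exact_mod_cast hm
  have hmz : (0:ℤ) < m := by exact_mod_cast hm
  set a : ℤ := ⌊(m:ℝ) * τ.2⌋ with ha
  set b : ℤ := ⌊(m:ℝ) * τ.1⌋ with hb
  set b0 : ℤ := b % m with hb0
  set b1 : ℤ := b / m with hb1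
  have hbb : b = m * b1 + b0 := (Int.mul_ediv_add_emod b m).symm
  have hb0n : 0 ≤ b0 := Int.emod_nonneg _ hmz.ne'
  have hb0l : b0 < m := Int.emod_lt_of_pos _ hmz
  set j0 : ℤ := m * a + b0 with hj0
  set c : ℤ := (j0 - 1) / (m ^ 2 : ℤ) with hc
  set j : ℤ := (j0 - 1) % (m ^ 2 : ℤ) + 1 with hj
  have hm2 : (0:ℤ) < (m : ℤ) ^ 2 := by positivity
  have hjj : j0 = m ^ 2 * c + j := by
    have := Int.mul_ediv_add_emod (j0 - 1) (m ^ 2 : ℤ)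
    rw [← hc] at this
    linarith
  have hj1 : 1 ≤ j := by
    have := Int.emod_nonneg (j0 - 1) hm2.ne'
    linarith
  have hj2 : j ≤ m ^ 2 := by
    have := Int.emod_lt_of_pos (j0 - 1) hm2
    linarith
  clear_value j c b0 b1
  obtain ⟨J, rfl⟩ : ∃ J : ℕ, j = J := ⟨j.toNat, by omega⟩
  refine ⟨s.q * J, Nat.mul_pos h.qpos (by omega), ?_, (J * p.1 + a - m * c - b1, J * p.2 - c), ?_⟩
  · simp only [St.next]
    exact Nat.mul_le_mul_left _ (by exact_mod_cast hj2)
  · have hJ : (J : ℝ) = m * a + b0 - m ^ 2 * c := by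
      have : (J : ℤ) = m * a + b0 - m ^ 2 * c := by linarith
      exact_mod_cast this
    have hbR : (b : ℝ) = m * b1 + b0 := by exact_mod_cast hbb
    have hb0R : (0:ℝ) ≤ b0 := by exact_mod_cast hb0n
    have hb0R' : (b0:ℝ) ≤ m := by exact_mod_cast hb0l.le
    have f1 := Int.floor_le ((m:ℝ) * τ.1)
    have f2 := Int.lt_floor_add_one ((m:ℝ) * τ.1)
    have f3 := Int.floor_le ((m:ℝ) * τ.2)
    have f4 := Int.lt_floor_add_one ((m:ℝ) * τ.2)
    rw [← hb] at f1 f2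
    rw [← ha] at f3 f4
    rw [Prod.norm_def, max_le_iff]
    constructor
    · have e : (((s.q * J : ℕ) : ℝ) • (s.next m).w -
          (τ + intVec (J * p.1 + a - m * c - b1, J * p.2 - c))).1 = (b - m * τ.1) / m := by
        simp only [St.next, St.inc, intVec, Prod.fst_sub, Prod.fst_add, Prod.smul_fst, smul_eq_mul]
        push_cast
        rw [← hp1, hbR]
        field_simp
        rw [hJ]
        ring
      rw [e, Real.norm_eq_abs, abs_div, abs_of_pos hm']
      gcongr
      rw [abs_le]
      constructor <;> linarith
    · have e : (((s.q * J : ℕ) : ℝ) • (s.next m).w -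
          (τ + intVec (J * p.1 + a - m * c - b1, J * p.2 - c))).2 =
          (a - m * τ.2 + b0 / m) / m := by
        simp only [St.next, St.inc, intVec, Prod.snd_sub, Prod.snd_add, Prod.smul_snd, smul_eq_mul]
        push_cast
        rw [← hp2]
        field_simp
        rw [hJ]
        ring
      rw [e, Real.norm_eq_abs, abs_div, abs_of_pos hm']
      have g1 : (0:ℝ) ≤ b0 / m := by positivity
      have g2 : (b0:ℝ) / m ≤ 1 := by rw [div_le_one hm']; exact hb0R'
      gcongr
      rw [abs_le]
      constructor <;> linarith

lemma exists_seq : ∃ (S : ℕ → St) (M : ℕ → ℕ), S 0 = St.init ∧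
    ∀ n, StInv (S n) ∧ Good n (S n) (M n) ∧ S (n + 1) = (S n).next (M n) := by
  choose m hm using fun (s : {s : St // StInv s}) (n : ℕ) => good_exists s.2 n
  let T : ℕ → {s : St // StInv s} := fun n => Nat.rec ⟨St.init, inv_init⟩
    (fun n s => ⟨s.1.next (m s n), inv_next s.2 (by have := (hm s n).two; omega)⟩) n
  exact ⟨fun n => (T n).1, fun n => m (T n) n, rfl, fun n => ⟨(T n).2, hm (T n) n, rfl⟩⟩

/-! ### Passing to the limit -/

/-- The conjugated rotation at a stage. -/
def St.G (s : St) (z : R2) : R2 := s.H (s.K z + s.w)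

/-- Its inverse. -/
def St.G' (s : St) (z : R2) : R2 := s.H (s.K z + -s.w)

lemma G_iter {s : St} (h : StInv s) (N : ℕ) (z : R2) :
    s.G^[N] z = s.H (s.K z + (N : ℝ) • s.w) := by
  induction N with
  | zero => simp [h.HK]
  | succ N ih =>
    rw [Function.iterate_succ_apply', ih, St.G, h.KH]
    congr 1
    push_cast
    rw [add_smul, one_smul, add_assoc]

/-- A valid sequence of stages. -/
structure Sq (S : ℕ → St) (M : ℕ → ℕ) : Prop where
  zero : S 0 = St.init
  inv : ∀ n, StInv (S n)
  good : ∀ n, Good n (S n) (M n)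
  step : ∀ n, S (n + 1) = (S n).next (M n)

lemma comp_lim {A : ℕ → R2 → R2} {B : R2 → R2} (hc : Continuous B)
    (hu : ∀ n ≥ 1, ∀ z, ‖B z - A n z‖ ≤ 2 * ep n) {y : ℕ → R2} {l : R2}
    (hy : Tendsto y atTop (𝓝 l)) : Tendsto (fun n => A n (y n)) atTop (𝓝 (B l)) := by
  have h1 : Tendsto (fun n => B (y n)) atTop (𝓝 (B l)) := (hc.tendsto l).comp hy
  have h2 : Tendsto (fun n => B (y n) - A n (y n)) atTop (𝓝 0) := by
    rw [tendsto_zero_iff_norm_tendsto_zero]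
    refine squeeze_zero' (Eventually.of_forall fun _ => norm_nonneg _) ?_
      (by simpa using ep_tendsto.const_mul 2)
    filter_upwards [eventually_ge_atTop 1] with n hn
    exact hu n hn _
  simpa using h1.sub h2

lemma cont_lim {A : ℕ → R2 → R2} {B : R2 → R2} (hA : ∀ n, Continuous (A n))
    (hu : ∀ n ≥ 1, ∀ z, ‖B z - A n z‖ ≤ 2 * ep n) : Continuous B := by
  have h : TendstoUniformly A B atTop := by
    rw [Metric.tendstoUniformly_iff]
    intro ε hε
    have h2 : Tendsto (fun n => 2 * ep n) atTop (𝓝 0) := by simpa using ep_tendsto.const_mul 2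
    filter_upwards [eventually_ge_atTop 1, h2.eventually (gt_mem_nhds hε)] with n hn h3 z
    rw [dist_eq_norm]
    exact (hu n hn z).trans_lt h3
  exact h.continuous (Eventually.of_forall hA).frequently

section
variable {S : ℕ → St} {M : ℕ → ℕ}

lemma Sq.Mpos (h : Sq S M) (n : ℕ) : 0 < M n := by have := (h.good n).two; omega

lemma Sq.w_succ (h : Sq S M) (n : ℕ) : (S (n + 1)).w = (S n).w + (S n).inc (M n) := by
  rw [h.step]; rfl

lemma Sq.q_succ (h : Sq S M) (n : ℕ) : (S (n + 1)).q = (S n).q * M n ^ 2 := by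
  rw [h.step]; rfl

lemma Sq.q_strict (h : Sq S M) : StrictMono fun n => (S n).q := by
  apply strictMono_nat_of_lt_succ
  intro n
  rw [h.q_succ]
  have := (h.good n).two
  have := (h.inv n).qpos
  have h4 : 4 ≤ M n ^ 2 := by nlinarith
  nlinarith

lemma Sq.conj (h : Sq S M) (n : ℕ) (u : R2)
    (hu : ∃ v : ℤ × ℤ, ((S (n + 1)).q : ℝ) • u = intVec v) (z : R2) :
    (S (n + 1)).H ((S (n + 1)).K z + u) = (S n).H ((S n).K z + u) := by
  rw [h.step] at hu ⊢
  exact next_conj _ _ _ hu z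

lemma Sq.conj_mul (h : Sq S M) (n : ℕ) (N : ℕ) (z : R2) :
    (S (n + 1)).H ((S (n + 1)).K z + (N : ℝ) • (S (n + 1)).w) =
      (S n).H ((S n).K z + (N : ℝ) • (S (n + 1)).w) := by
  apply h.conj
  obtain ⟨v, hv⟩ := (h.inv (n + 1)).rat
  refine ⟨(N * v.1, N * v.2), ?_⟩
  rw [smul_comm, hv]
  ext <;> simp [intVec]

lemma Sq.G_succ (h : Sq S M) (n : ℕ) (z : R2) :
    (S (n + 1)).G z = (S n).H ((S n).K z + ((S n).w + (S n).inc (M n))) := by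
  unfold St.G
  rw [h.conj n _ (h.inv (n + 1)).rat, h.w_succ]

lemma Sq.G'_succ (h : Sq S M) (n : ℕ) (z : R2) :
    (S (n + 1)).G' z = (S n).H ((S n).K z + -((S n).w + (S n).inc (M n))) := by
  unfold St.G'
  rw [h.conj n _, h.w_succ]
  obtain ⟨v, hv⟩ := (h.inv (n + 1)).rat
  refine ⟨-v, ?_⟩
  rw [smul_neg, hv]
  ext <;> simp [intVec]

lemma Sq.iter_close (h : Sq S M) (n N : ℕ) (hN : N ≤ (S n).q) (z : R2) :
    ‖(S (n + 1)).G^[N] z - (S n).G^[N] z‖ ≤ ep n := by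
  rw [G_iter (h.inv _), G_iter (h.inv _), h.conj_mul, h.w_succ]
  exact (h.good n).it N hN _

lemma Sq.G_close (h : Sq S M) (n : ℕ) (z : R2) : ‖(S (n + 1)).G z - (S n).G z‖ ≤ ep n :=
  h.iter_close n 1 (h.inv n).qpos z

lemma Sq.G'_close (h : Sq S M) (n : ℕ) (z : R2) : ‖(S (n + 1)).G' z - (S n).G' z‖ ≤ ep n := by
  have := (h.good n).ck' 0 (Nat.zero_le _) z
  rw [norm_iteratedFDeriv_zero] at this
  rw [h.G'_succ]
  exact this

lemma G_smooth {s : St} (h : StInv s) : ContDiff ℝ (⊤ : ℕ∞) s.G :=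
  h.sH.comp (h.sK.add contDiff_const)

lemma G'_smooth {s : St} (h : StInv s) : ContDiff ℝ (⊤ : ℕ∞) s.G' :=
  h.sH.comp (h.sK.add contDiff_const)

lemma G_equiv {s : St} (h : StInv s) : Equivariant s.G :=
  h.eH.comp ((trans_eq s.w).comp h.eK)

lemma G'_equiv {s : St} (h : StInv s) : Equivariant s.G' :=
  h.eH.comp ((trans_eq (-s.w)).comp h.eK)

lemma G_mp {s : St} (h : StInv s) : MeasurePreserving (desc s.G) (volume : Measure T2) volume := by
  have : s.G = s.H ∘ (fun z => z + s.w) ∘ s.K := rfl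
  rw [this, desc_comp h.eH ((trans_eq s.w).comp h.eK), desc_comp (trans_eq s.w) h.eK]
  exact h.mH.comp ((trans_mp _).comp h.mK)

lemma equiv_lim {A : ℕ → R2 → R2} {B : R2 → R2} (hA : ∀ n, Equivariant (A n))
    (hB : ∀ z, Tendsto (fun n => A n z) atTop (𝓝 (B z))) : Equivariant B := by
  intro z v
  have h1 := hB (z + intVec v)
  simp only [(hA _) z v] at h1
  exact tendsto_nhds_unique h1 ((hB z).add_const _)

lemma Sq.exists_F (h : Sq S M) : ∃ F : R2 → R2, ContDiff ℝ (⊤ : ℕ∞) F ∧ Equivariant F ∧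
    (∀ z, Tendsto (fun n => (S n).G z) atTop (𝓝 (F z))) ∧
    ∀ n z, ‖F z - (S n).G z‖ ≤ 2 * ep n := by
  choose F hF using fun z => tele_exists (u := fun n => (S n).G z) 0 (fun k _ => h.G_close k z)
  refine ⟨F, ?_, equiv_lim (fun n => G_equiv (h.inv n)) hF, hF, fun n z =>
    tele_lim n (fun k _ => h.G_close k z) (hF z)⟩
  refine smooth_limit (fun n => G_smooth (h.inv n)) ?_ hF
  intro n k hk z
  simp only [h.G_succ]
  exact (h.good n).ck k hk z

lemma Sq.exists_F' (h : Sq S M) : ∃ F : R2 → R2, ContDiff ℝ (⊤ : ℕ∞) F ∧ Equivariant F ∧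
    (∀ z, Tendsto (fun n => (S n).G' z) atTop (𝓝 (F z))) ∧
    ∀ n z, ‖F z - (S n).G' z‖ ≤ 2 * ep n := by
  choose F hF using fun z => tele_exists (u := fun n => (S n).G' z) 0 (fun k _ => h.G'_close k z)
  refine ⟨F, ?_, equiv_lim (fun n => G'_equiv (h.inv n)) hF, hF, fun n z =>
    tele_lim n (fun k _ => h.G'_close k z) (hF z)⟩
  refine smooth_limit (fun n => G'_smooth (h.inv n)) ?_ hF
  intro n k hk z
  simp only [h.G'_succ]
  exact (h.good n).ck' k hk z

lemma Sq.iter_lim (h : Sq S M) {F : R2 → R2} (hc : Continuous F)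
    (hu : ∀ n z, ‖F z - (S n).G z‖ ≤ 2 * ep n) (N : ℕ) (z : R2) :
    Tendsto (fun n => (S n).G^[N] z) atTop (𝓝 (F^[N] z)) := by
  induction N with
  | zero => exact tendsto_const_nhds
  | succ N ih =>
    simp only [Function.iterate_succ_apply']
    exact comp_lim (A := fun n => (S n).G) hc (fun n _ => hu n) ih

lemma Sq.iter_near (h : Sq S M) {F : R2 → R2} (hc : Continuous F)
    (hu : ∀ n z, ‖F z - (S n).G z‖ ≤ 2 * ep n) (n N : ℕ) (hN : N ≤ (S n).q) (z : R2) :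
    ‖F^[N] z - (S n).G^[N] z‖ ≤ 2 * ep n :=
  tele_lim (u := fun n => (S n).G^[N] z) n
    (fun k hk => h.iter_close k N (hN.trans (h.q_strict.monotone hk)) z) (h.iter_lim hc hu N z)

lemma Sq.exists_w (h : Sq S M) : ∃ ω : R2, Tendsto (fun n => (S n).w) atTop (𝓝 ω) ∧
    ∀ n : ℕ, Real.exp (n * (S n).q) * (S n).q * ‖ω - (S n).w‖ ≤ 2 * ep n := by
  have hq : ∀ n, (1:ℝ) ≤ (S n).q := fun n => by exact_mod_cast (h.inv n).qpos
  have hstep : ∀ n k : ℕ, n ≤ k →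
      Real.exp (n * (S n).q) * (S n).q * ‖(S (k + 1)).w - (S k).w‖ ≤ ep k := by
    intro n k hk
    refine le_trans ?_ (h.good k).liou
    rw [h.w_succ, add_sub_cancel_left]
    have h1 : ((S n).q : ℝ) ≤ (S k).q := by exact_mod_cast h.q_strict.monotone hk
    have h2 : (n : ℝ) ≤ k := by exact_mod_cast hk
    have := hq n
    gcongr
  have h0 : ∀ k ≥ 0, ‖(S (k + 1)).w - (S k).w‖ ≤ ep k := by
    intro k _
    refine le_trans ?_ (hstep 0 k (Nat.zero_le _))
    have := hq 0
    simp only [CharP.cast_eq_zero, zero_mul, Real.exp_zero, one_mul]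
    nlinarith [norm_nonneg ((S (k + 1)).w - (S k).w)]
  obtain ⟨ω, hω⟩ := tele_exists (u := fun k => (S k).w) 0 h0
  refine ⟨ω, hω, fun n => ?_⟩
  set c : ℝ := Real.exp (n * (S n).q) * (S n).q with hc
  have hc0 : 0 ≤ c := by positivity
  have := tele_lim (u := fun k => c • (S k).w) (l := c • ω) n ?_ (hω.const_smul c)
  · rwa [← smul_sub, norm_smul, Real.norm_of_nonneg hc0] at this
  · intro k hk
    rw [← smul_sub, norm_smul, Real.norm_of_nonneg hc0]
    exact hstep n k hk

lemma Sq.K_close (h : Sq S M) (n : ℕ) (z : R2) :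
    ‖(S (n + 1)).K z - (S n).K z‖ ≤ 1 / (S n).q := by
  rw [h.step]
  exact next_K_near _ _ (h.inv n).qpos (h.Mpos n) z

lemma Sq.K_close' (h : Sq S M) (z : R2) (n : ℕ) (hn : n ≥ 1) :
    ‖(S (n + 1)).K z - (S n).K z‖ ≤ ep n := by
  refine (h.K_close n z).trans ?_
  obtain ⟨k, rfl⟩ : ∃ k, n = k + 1 := ⟨n - 1, by omega⟩
  have := (h.good k).qbig
  rwa [← h.step] at this

lemma Sq.exists_K (h : Sq S M) : ∃ K : R2 → R2, Continuous K ∧ Equivariant K ∧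
    (∀ n ≥ 1, ∀ z, ‖K z - (S n).K z‖ ≤ 2 * ep n) ∧
    (∀ z, Tendsto (fun n => (S n).K z) atTop (𝓝 (K z))) ∧ ∀ z, ‖K z - z‖ ≤ 2 := by
  choose K hK using fun z => tele_exists (u := fun n => (S n).K z) 1 (h.K_close' z)
  have hu : ∀ n ≥ 1, ∀ z, ‖K z - (S n).K z‖ ≤ 2 * ep n := fun n hn z =>
    tele_lim n (fun k hk => h.K_close' z k (hn.le.trans hk)) (hK z)
  refine ⟨K, cont_lim (fun n => (h.inv n).sK.continuous) hu,
    equiv_lim (fun n => (h.inv n).eK) hK, hu, hK, fun z => ?_⟩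
  have h1 := hu 1 le_rfl z
  have h2 := h.K_close 0 z
  have h3 : (S 0).K z = z := by rw [h.zero]; rfl
  have h4 : (S 0).q = 1 := by rw [h.zero]; rfl
  rw [h3, h4] at h2
  have h5 := norm_sub_le_norm_sub_add_norm_sub (K z) ((S 1).K z) z
  have h6 : ep 1 ≤ ep 0 := ep_anti (by omega)
  rw [ep_zero] at h6
  norm_num at h2
  linarith

lemma Sq.w_dense (h : Sq S M) {ω : R2}
    (hω : ∀ n : ℕ, Real.exp (n * (S n).q) * (S n).q * ‖ω - (S n).w‖ ≤ 2 * ep n)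
    (τ : R2) {δ : ℝ} (hδ : 0 < δ) :
    ∃ (N : ℕ) (v : ℤ × ℤ), ‖(N : ℝ) • ω - (τ + intVec v)‖ < δ := by
  have ht : Tendsto (fun n => 4 * ep n) atTop (𝓝 0) := by simpa using ep_tendsto.const_mul 4
  obtain ⟨n, hn⟩ := (ht.eventually (gt_mem_nhds hδ)).exists
  obtain ⟨N, -, hN, v, hv⟩ := density (h.inv n) (h.Mpos n) τ
  rw [← h.step] at hN hv
  refine ⟨N, v, ?_⟩
  have h1 : ‖(N : ℝ) • ω - (N : ℝ) • (S (n + 1)).w‖ ≤ 2 * ep (n + 1) := by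
    rw [← smul_sub, norm_smul, Real.norm_natCast]
    refine le_trans ?_ (hω (n + 1))
    have hN' : (N : ℝ) ≤ (S (n + 1)).q := by exact_mod_cast hN
    have he : 1 ≤ Real.exp ((n + 1 : ℕ) * (S (n + 1)).q) := Real.one_le_exp (by positivity)
    gcongr
    nlinarith
  have h2 := (h.good n).mbig
  have h3 := norm_sub_le_norm_sub_add_norm_sub ((N : ℝ) • ω) ((N : ℝ) • (S (n + 1)).w)
    (τ + intVec v)
  have h4 := ep_succ n
  have h5 : (2:ℝ) / M n = 2 * (1 / M n) := by ring
  have h6 := ep_pos n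
  rw [h5] at hv
  linarith

lemma totIrr {ω : R2} (hd : ∀ (τ : R2) (δ : ℝ), 0 < δ →
    ∃ (N : ℕ) (v : ℤ × ℤ), ‖(N : ℝ) • ω - (τ + intVec v)‖ < δ) : TotallyIrrationalVec ω := by
  intro d1 d2 e hde
  by_cases hd0 : d1 = 0 ∧ d2 = 0
  · obtain ⟨rfl, rfl⟩ := hd0
    simp at hde
    exact ⟨rfl, rfl, hde⟩
  exfalso
  have hpos : 0 < (d1 : ℝ) ^ 2 + (d2 : ℝ) ^ 2 := by
    by_contra hcon
    have h1 : (d1 : ℝ) = 0 := by nlinarith [sq_nonneg (d1:ℝ), sq_nonneg (d2:ℝ)]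
    have h2 : (d2 : ℝ) = 0 := by nlinarith [sq_nonneg (d1:ℝ), sq_nonneg (d2:ℝ)]
    exact hd0 ⟨by exact_mod_cast h1, by exact_mod_cast h2⟩
  set D : ℝ := (d1 : ℝ) ^ 2 + (d2 : ℝ) ^ 2 with hD
  set A : ℝ := |(d1:ℝ)| + |(d2:ℝ)| + 1 with hA
  have hA0 : 0 < A := by positivity
  obtain ⟨N, v, hv⟩ := hd (d1 / (2 * D), d2 / (2 * D)) (1 / (4 * A)) (by positivity)
  set r := (N : ℝ) • ω - ((d1 / (2 * D), d2 / (2 * D)) + intVec v) with hr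
  have hr1 : |r.1| ≤ ‖r‖ := norm_fst_le r
  have hr2 : |r.2| ≤ ‖r‖ := norm_snd_le r
  have e1 : r.1 = N * ω.1 - (d1 / (2 * D) + v.1) := rfl
  have e2 : r.2 = N * ω.2 - (d2 / (2 * D) + v.2) := rfl
  have key : d1 * r.1 + d2 * r.2 = ((-(N * e) - d1 * v.1 - d2 * v.2 : ℤ) : ℝ) - 1 / 2 := by
    have : (d1:ℝ) * (d1 / (2 * D)) + d2 * (d2 / (2 * D)) = 1 / 2 := by
      field_simp; rw [hD]
    rw [e1, e2]
    push_cast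
    linear_combination (N : ℝ) * hde - this
  have hb : |d1 * r.1 + d2 * r.2| < 1 / 2 := by
    have h1 : |d1 * r.1 + d2 * r.2| ≤ A * ‖r‖ := by
      refine (abs_add_le _ _).trans ?_
      rw [abs_mul, abs_mul, hA]
      have := norm_nonneg r
      nlinarith [mul_le_mul_of_nonneg_left hr1 (abs_nonneg (d1:ℝ)),
        mul_le_mul_of_nonneg_left hr2 (abs_nonneg (d2:ℝ))]
    have h2 : A * ‖r‖ < A * (1 / (4 * A)) := mul_lt_mul_of_pos_left hv hA0
    have h3 : A * (1 / (4 * A)) = 1 / 4 := by field_simp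
    linarith
  rw [key, abs_lt] at hb
  generalize (-(N * e) - d1 * v.1 - d2 * v.2 : ℤ) = k at hb
  have h1 : (0:ℝ) < k := by linarith [hb.1]
  have h2 : (k:ℝ) < 1 := by linarith [hb.2]
  have h3 : 0 < k := by exact_mod_cast h1
  have h4 : k < 1 := by exact_mod_cast h2
  omega

lemma normT2_le (u : R2) (v : ℤ × ℤ) : normT2 u ≤ enorm2 (u - intVec v) :=
  ciInf_le ⟨0, by rintro _ ⟨v, rfl⟩; exact enorm2_nonneg _⟩ v

lemma normT2_pos {ω : R2} (hω : TotallyIrrationalVec ω) {N : ℕ} (hN : 0 < N) :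
    0 < normT2 ((N : ℝ) • ω) := by
  have hne : (N : ℝ) * ω.1 - round ((N : ℝ) * ω.1) ≠ 0 := by
    intro h0
    have := hω N 0 (-round ((N : ℝ) * ω.1)) (by push_cast; linarith)
    have := this.1
    omega
  refine lt_of_lt_of_le (abs_pos.2 hne) (le_ciInf fun v => ?_)
  have h1 := round_le ((N:ℝ) * ω.1) v.1
  have h2 := abs_fst_le_enorm2 ((N:ℝ) • ω - intVec v)
  exact h1.trans h2

lemma Sq.liouville (h : Sq S M) {ω : R2} (ht : TotallyIrrationalVec ω)
    (hω : ∀ n : ℕ, Real.exp (n * (S n).q) * (S n).q * ‖ω - (S n).w‖ ≤ 2 * ep n) :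
    SuperLiouville ω := by
  intro B
  rw [frequently_atTop]
  intro a
  obtain ⟨k, hk⟩ := exists_nat_gt (max (a : ℝ) (-B))
  have hka : a ≤ k := by
    have := (le_max_left (a:ℝ) (-B)).trans hk.le
    exact_mod_cast this
  have hkB : -(k:ℝ) < B := by linarith [(le_max_right (a:ℝ) (-B)).trans_lt hk]
  refine ⟨(S k).q, hka.trans (h.q_strict.id_le k), ?_⟩
  set q := (S k).q with hq
  have hqp : 0 < q := (h.inv k).qpos
  have hqR : (0:ℝ) < q := by exact_mod_cast hqp
  obtain ⟨v, hv⟩ := (h.inv k).rat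
  have hpos := normT2_pos ht hqp
  have hle : normT2 ((q : ℝ) • ω) ≤ Real.exp (-(k * q)) := by
    refine (normT2_le _ v).trans ((enorm2_le _).trans ?_)
    rw [← hv, ← smul_sub, norm_smul, Real.norm_natCast]
    have h1 := hω k
    have h2 : ep k ≤ 1 / 100 := by rw [← ep_zero]; exact ep_anti (Nat.zero_le _)
    rw [Real.exp_neg, ← one_div, le_div_iff₀ (Real.exp_pos _)]
    nlinarith
  have hlog : Real.log (normT2 ((q : ℝ) • ω)) ≤ -(k * q) := by
    have := Real.log_le_log hpos hle
    rwa [Real.log_exp] at this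
  calc (q : ℝ)⁻¹ * Real.log (normT2 ((q : ℝ) • ω)) ≤ (q : ℝ)⁻¹ * (-(k * q)) := by gcongr
    _ = -(k:ℝ) := by field_simp
    _ < B := hkB

end

/-! ### Dynamics of the limit -/

section
variable {S : ℕ → St} {M : ℕ → ℕ}

lemma Sq.shadow (h : Sq S M) {F : R2 → R2} (hc : Continuous F)
    (hu : ∀ n z, ‖F z - (S n).G z‖ ≤ 2 * ep n) (n N : ℕ) (hN : N ≤ (S (n + 1)).q)
    (τ : R2) (v : ℤ × ℤ) (hv : ‖(N : ℝ) • (S (n + 1)).w - (τ + intVec v)‖ ≤ 2 / M n) (z : R2) :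
    ‖F^[N] z - ((S n).H ((S n).K z + τ) + intVec v)‖ ≤ 2 * ep n := by
  have h1 := h.iter_near hc hu (n + 1) N hN z
  rw [G_iter (h.inv _), h.conj_mul, ep_succ] at h1
  have h2 := (h.good n).unif ((S n).K z + (N : ℝ) • (S (n + 1)).w)
    ((S n).K z + τ + intVec v) (by
      rw [add_assoc, add_sub_add_left_eq_sub]
      refine hv.trans ?_
      gcongr
      norm_num)
  rw [(h.inv n).eH] at h2
  have h3 := norm_sub_le_norm_sub_add_norm_sub (F^[N] z)
    ((S n).H ((S n).K z + (N : ℝ) • (S (n + 1)).w)) ((S n).H ((S n).K z + τ) + intVec v)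
  linarith

lemma inv_lim {A B : ℕ → R2 → R2} {F F' : R2 → R2} (hc : Continuous F)
    (hA : ∀ n z, ‖F z - A n z‖ ≤ 2 * ep n)
    (hB : ∀ z, Tendsto (fun n => B n z) atTop (𝓝 (F' z)))
    (h : ∀ n z, A n (B n z) = z) (z : R2) : F (F' z) = z := by
  have := comp_lim hc (fun n _ => hA n) (hB z)
  simp only [h] at this
  exact tendsto_nhds_unique this tendsto_const_nhds

lemma G_G' {s : St} (h : StInv s) (z : R2) : s.G (s.G' z) = z := by
  simp [St.G, St.G', h.KH, h.HK]

lemma G'_G {s : St} (h : StInv s) (z : R2) : s.G' (s.G z) = z := by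
  simp [St.G, St.G', h.KH, h.HK]

lemma semi_lim {F K : R2 → R2} {ω : R2} (h : Sq S M) (hKc : Continuous K)
    (hKu : ∀ n ≥ 1, ∀ z, ‖K z - (S n).K z‖ ≤ 2 * ep n)
    (hK : ∀ z, Tendsto (fun n => (S n).K z) atTop (𝓝 (K z)))
    (hF : ∀ z, Tendsto (fun n => (S n).G z) atTop (𝓝 (F z)))
    (hω : Tendsto (fun n => (S n).w) atTop (𝓝 ω)) (z : R2) : K (F z) = K z + ω := by
  have h1 := comp_lim hKc hKu (hF z)
  have h2 : ∀ n, (S n).K ((S n).G z) = (S n).K z + (S n).w := fun n => by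
    rw [St.G, (h.inv n).KH]
  simp only [h2] at h1
  exact tendsto_nhds_unique h1 ((hK z).add hω)

lemma semi_iter {F K : R2 → R2} {ω : R2} (hs : ∀ z, K (F z) = K z + ω) (n : ℕ) (z : R2) :
    K (F^[n] z) = K z + (n : ℝ) • ω := by
  induction n with
  | zero => simp
  | succ n ih =>
    rw [Function.iterate_succ_apply', hs, ih]
    push_cast
    rw [add_smul, one_smul, add_assoc]

lemma bmm {F K : R2 → R2} {ω : R2} (hs : ∀ z, K (F z) = K z + ω)
    (hK : ∀ z, ‖K z - z‖ ≤ 2) (n : ℕ) (z : R2) : ‖F^[n] z - z - (n : ℝ) • ω‖ ≤ 4 := by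
  have h1 : F^[n] z - z - (n : ℝ) • ω = (K z - z) - (K (F^[n] z) - F^[n] z) := by
    rw [semi_iter hs]; abel
  rw [h1]
  have := norm_sub_le (K z - z) (K (F^[n] z) - F^[n] z)
  linarith [hK z, hK (F^[n] z)]

lemma rot_eq {F : R2 → R2} {ω : R2}
    (hb : ∀ (n : ℕ) z, ‖F^[n] z - z - (n : ℝ) • ω‖ ≤ 4) : rotSet F = {ω} := by
  have key : ∀ (z : ℕ → R2) (n : ℕ → ℕ), Tendsto n atTop atTop →
      Tendsto (fun i => ((n i : ℝ))⁻¹ • (F^[n i] (z i) - z i)) atTop (𝓝 ω) := by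
    intro z n hn
    rw [tendsto_iff_norm_sub_tendsto_zero]
    have h0 : Tendsto (fun i => ((n i : ℝ))⁻¹ * 4) atTop (𝓝 0) := by
      have := (tendsto_inv_atTop_zero.comp (tendsto_natCast_atTop_atTop (R := ℝ))).comp hn
      simpa using this.mul_const 4
    refine squeeze_zero' (Eventually.of_forall fun _ => norm_nonneg _) ?_ h0
    filter_upwards [hn.eventually (eventually_gt_atTop 0)] with i hi
    have hi' : (n i : ℝ) ≠ 0 := by exact_mod_cast hi.ne'
    have e : ((n i : ℝ))⁻¹ • (F^[n i] (z i) - z i) - ω =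
        ((n i : ℝ))⁻¹ • (F^[n i] (z i) - z i - (n i : ℝ) • ω) := by
      rw [smul_sub _ _ ((n i : ℝ) • ω), smul_smul, inv_mul_cancel₀ hi', one_smul]
    rw [e, norm_smul, norm_inv, Real.norm_natCast]
    gcongr
    exact hb _ _
  ext v
  constructor
  · rintro ⟨z, n, hn, ht⟩
    exact tendsto_nhds_unique ht (key z n hn)
  · rintro rfl
    exact ⟨fun _ => 0, id, tendsto_id, key _ _ tendsto_id⟩

lemma Sq.minimal (h : Sq S M) {F : R2 → R2} (hc : Continuous F) (he : Equivariant F)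
    (hu : ∀ n z, ‖F z - (S n).G z‖ ≤ 2 * ep n) : MinimalMap (desc F) := by
  intro x
  obtain ⟨z, rfl⟩ := pr2_surj x
  rw [Metric.dense_iff]
  intro y' r hr
  obtain ⟨y, rfl⟩ := pr2_surj y'
  have ht : Tendsto (fun n => 4 * ep n) atTop (𝓝 0) := by simpa using ep_tendsto.const_mul 4
  obtain ⟨n, hn⟩ := (ht.eventually (gt_mem_nhds hr)).exists
  obtain ⟨N, -, hN, v, hv⟩ := density (h.inv n) (h.Mpos n) ((S n).K y - (S n).K z)
  rw [← h.step] at hN hv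
  have h1 := h.shadow hc hu n N hN _ v hv z
  rw [add_sub_cancel, (h.inv n).HK] at h1
  refine ⟨(desc F)^[N] (pr2 z), ?_, N, rfl⟩
  rw [Metric.mem_ball, lift_iterate (desc_lift he), ← pr2_add_int y v]
  refine (dist_le_distT2 _ _).trans_lt ((distT2_le _ _).trans_lt ?_)
  linarith

lemma semi_surj {K : R2 → R2} {F : R2 → R2} {ω : R2} (hKc : Continuous K) (hKe : Equivariant K)
    (hs : ∀ z, K (F z) = K z + ω) (hd : ∀ (τ : R2) (δ : ℝ), 0 < δ →
    ∃ (N : ℕ) (v : ℤ × ℤ), ‖(N : ℝ) • ω - (τ + intVec v)‖ < δ) :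
    Function.Surjective (desc K) := by
  have hcl : IsClosed (Set.range (desc K)) := (isCompact_range (desc_cont hKe hKc)).isClosed
  have hde : Dense (Set.range (desc K)) := by
    rw [Metric.dense_iff]
    intro y' r hr
    obtain ⟨y, rfl⟩ := pr2_surj y'
    obtain ⟨N, v, hv⟩ := hd (y - K 0) (r / 2) (by positivity)
    refine ⟨desc K (pr2 (F^[N] 0)), ?_, _, rfl⟩
    rw [Metric.mem_ball, ← desc_lift hKe, semi_iter hs, ← pr2_add_int y v]
    refine (dist_le_distT2 _ _).trans_lt ((distT2_le _ _).trans_lt ?_)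
    have : K 0 + (N : ℝ) • ω - (y + intVec v) = (N : ℝ) • ω - (y - K 0 + intVec v) := by abel
    rw [this]
    linarith
  rw [← Set.range_eq_univ, ← hcl.closure_eq, hde.closure_eq]

/-- The tracked point. -/
def uu (s : St) : R2 := (0, 1 / (4 * s.q))

lemma next_uu (s : St) (m : ℕ) (hq : 0 < s.q) (hm : 0 < m) :
    (s.next m).H (uu (s.next m)) = s.H (uu s +
      ((1 / (4 * ((s.q * m ^ 2 : ℕ) : ℝ)), 1 / (4 * ((s.q * m ^ 2 : ℕ) : ℝ))) : R2)) := by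
  have hQ : ((s.q * m ^ 2 : ℕ) : ℝ) ≠ 0 := by
    have : 0 < s.q * m ^ 2 := by positivity
    exact_mod_cast this.ne'
  simp only [St.next, Function.comp, uu]
  generalize (s.q * m ^ 2 : ℕ) = Q at hQ
  have e : 2 * Real.pi * (Q:ℝ) * (1 / (4 * Q)) = Real.pi / 2 := by field_simp; ring
  congr 1
  simp only [shU, shV, e, Real.sin_pi_div_two, mul_one, zero_add]
  ext <;> simp
  ring

lemma next_half (s : St) (m : ℕ) (hq : 0 < s.q) (hm : 0 < m) :
    (s.next m).H (0, 1 / (2 * ((s.next m).q : ℝ))) =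
      s.H (0, 1 / (2 * ((s.next m).q : ℝ))) := by
  have hQ : ((s.q * m ^ 2 : ℕ) : ℝ) ≠ 0 := by
    have : 0 < s.q * m ^ 2 := by positivity
    exact_mod_cast this.ne'
  simp only [St.next, Function.comp]
  generalize (s.q * m ^ 2 : ℕ) = Q at hQ
  have e : 2 * Real.pi * (Q:ℝ) * (1 / (2 * Q)) = Real.pi := by field_simp
  congr 1
  simp only [shU, shV, e, Real.sin_pi, mul_zero, zero_add, Real.sin_zero, add_zero]

lemma Sq.q_ge (h : Sq S M) (n : ℕ) : (M n : ℝ) ≤ (S (n + 1)).q := by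
  rw [h.q_succ]
  have h1 := h.Mpos n
  have h2 := (h.inv n).qpos
  have : M n ≤ (S n).q * M n ^ 2 := by
    calc M n = 1 * (M n * 1) := by ring
      _ ≤ (S n).q * (M n * M n) := by gcongr <;> omega
      _ = _ := by ring
  exact_mod_cast this

lemma Sq.uu_near (h : Sq S M) (n : ℕ) :
    ‖(S n).H (uu (S n)) - (0, 1 / 4)‖ ≤ 1 / 50 := by
  have h1 : ∀ k ≥ 0, ‖(S (k + 1)).H (uu (S (k + 1))) - (S k).H (uu (S k))‖ ≤ ep k := by
    intro k _
    have hq := h.q_ge k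
    have hM : (0:ℝ) < M k := by exact_mod_cast h.Mpos k
    rw [h.q_succ] at hq
    rw [h.step, next_uu _ _ (h.inv k).qpos (h.Mpos k)]
    apply (h.good k).unif
    rw [add_sub_cancel_left, Prod.norm_def]
    simp only [max_self]
    rw [Real.norm_of_nonneg (by positivity)]
    have : (1:ℝ) / (4 * ((S k).q * M k ^ 2 : ℕ)) ≤ 1 / M k := by
      apply one_div_le_one_div_of_le hM
      linarith
    refine this.trans ?_
    gcongr
    norm_num
  have h2 := tele_fin (fun k => (S k).H (uu (S k))) 0 h1 n (Nat.zero_le _)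
  have h3 : (S 0).H (uu (S 0)) = (0, 1 / 4) := by
    rw [h.zero]; simp [St.init, uu]
  simp only [h3, ep_zero] at h2
  linarith [ep_pos n]

lemma distT2_ge (a b : R2) (h1 : 2 / 5 ≤ a.2 - b.2) (h2 : a.2 - b.2 ≤ 3 / 5) :
    1 / 1000 ≤ distT2 (pr2 a) (pr2 b) := by
  unfold distT2
  refine le_csInf (s := {r | ∃ a' b' : R2, pr2 a' = pr2 a ∧ pr2 b' = pr2 b ∧
    r = enorm2 (a' - b')}) ⟨_, a, b, rfl, rfl, rfl⟩ ?_
  rintro _ ⟨a', b', ha, hb, rfl⟩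
  obtain ⟨v, rfl⟩ := (pr2_eq_iff _ _).1 ha
  obtain ⟨u, rfl⟩ := (pr2_eq_iff _ _).1 hb
  refine le_trans ?_ (abs_snd_le_enorm2 _)
  have e : (a + intVec v - (b + intVec u)).2 = (a.2 - b.2) + ((v.2 - u.2 : ℤ) : ℝ) := by
    simp [intVec]; ring
  rw [e]
  rcases le_or_gt 0 (v.2 - u.2) with hk | hk
  · have : (0:ℝ) ≤ ((v.2 - u.2 : ℤ) : ℝ) := by exact_mod_cast hk
    exact le_trans (by linarith) (le_abs_self _)
  · have hk' : v.2 - u.2 ≤ -1 := by omega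
    have : ((v.2 - u.2 : ℤ) : ℝ) ≤ -1 := by exact_mod_cast hk'
    exact le_trans (by linarith) (neg_le_abs _)

lemma Sq.sens (h : Sq S M) {F : R2 → R2} (hc : Continuous F) (he : Equivariant F)
    (hu : ∀ n z, ‖F z - (S n).G z‖ ≤ 2 * ep n) (ε : ℝ) (hε : 0 < ε) :
    ∃ (x y : T2) (N : ℕ), 0 < N ∧ distT2 x y < ε ∧
        1 / 1000 ≤ distT2 ((desc F)^[N] x) ((desc F)^[N] y) := by
  have ht : Tendsto (fun n => 2 * ep n) atTop (𝓝 0) := by simpa using ep_tendsto.const_mul 2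
  obtain ⟨k, hk⟩ := (ht.eventually (gt_mem_nhds hε)).exists
  set n := k + 1 with hn
  set t : R2 := (0, 1 / (2 * ((S n).q : ℝ))) with ht
  have hH0 : ∀ j, (S j).H 0 = 0 := fun j => by
    have := (h.inv j).odd 0
    rw [neg_zero] at this
    exact self_eq_neg.mp this
  have hK0 : (S n).K 0 = 0 := by
    have := (h.inv n).KH 0
    rwa [hH0] at this
  have hx : ‖(S n).H t‖ ≤ ep k := by
    have e : (S n).H t = (S k).H t := by
      rw [ht, hn, h.step]
      exact next_half _ _ (h.inv k).qpos (h.Mpos k)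
    have := (h.good k).unif t 0 (by
      have hq := h.q_ge k
      have hM : (0:ℝ) < M k := by exact_mod_cast h.Mpos k
      rw [sub_zero, ht, Prod.norm_def]
      simp only [norm_zero]
      rw [Real.norm_of_nonneg (by positivity), max_eq_right (by positivity)]
      have : (1:ℝ) / (2 * (S n).q) ≤ 1 / M k := by
        apply one_div_le_one_div_of_le hM
        linarith
      refine this.trans ?_
      gcongr
      norm_num)
    rwa [hH0, sub_zero, ← e] at this
  obtain ⟨N, hN0, hN, v, hv⟩ := density (h.inv n) (h.Mpos n) (-uu (S n))
  rw [← h.step] at hN hv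
  have hA := h.shadow hc hu n N hN _ v hv ((S n).H t)
  have hB := h.shadow hc hu n N hN _ v hv 0
  have hqp : (0:ℝ) < (S n).q := by exact_mod_cast (h.inv n).qpos
  have e1 : t + -uu (S n) = uu (S n) := by
    rw [ht]
    ext
    · simp [uu]
    · simp only [uu, Prod.snd_add, Prod.snd_neg]
      field_simp
      norm_num
  rw [(h.inv n).KH, e1] at hA
  rw [hK0, zero_add, (h.inv n).odd] at hB
  have hU := h.uu_near n
  set U := (S n).H (uu (S n))
  have hep : ep n ≤ 1 / 100 := by rw [← ep_zero]; exact ep_anti (Nat.zero_le _)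
  have a1 := (norm_snd_le _).trans hA
  have a2 := (norm_snd_le _).trans hB
  have a3 := (norm_snd_le _).trans hU
  simp only [Prod.snd_sub, Prod.snd_add, Prod.snd_neg, Real.norm_eq_abs, abs_le] at a1 a2 a3
  refine ⟨pr2 ((S n).H t), pr2 0, N, hN0, ?_, ?_⟩
  · refine (distT2_le _ _).trans_lt ?_
    rw [sub_zero]
    linarith
  · rw [lift_iterate (desc_lift he), lift_iterate (desc_lift he)]
    apply distT2_ge <;> linarith

lemma not_lin {f : T2 → T2} (hs : ∀ ε : ℝ, 0 < ε → ∃ (x y : T2) (N : ℕ), 0 < N ∧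
    distT2 x y < ε ∧ 1 / 1000 ≤ distT2 (f^[N] x) (f^[N] y)) : ¬ TopLinearizable f := by
  rintro ⟨w, φ, hφ, hw⟩
  set Φ := hφ.homeomorph with hΦ
  have hit : ∀ (N : ℕ) x, φ (f^[N] x) = φ x + N • w := by
    intro N x
    induction N with
    | zero => simp
    | succ N ih => rw [Function.iterate_succ_apply', hw, ih, succ_nsmul, add_assoc]
  have h1 := CompactSpace.uniformContinuous_of_continuous hφ.continuous
  have h2 := CompactSpace.uniformContinuous_of_continuous Φ.symm.continuous
  have hsy : ∀ x, Φ.symm (φ x) = x := fun x => Φ.symm_apply_apply x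
  obtain ⟨η, hη, h3⟩ := Metric.uniformContinuous_iff.1 h2 (1 / 4000) (by norm_num)
  obtain ⟨δ, hδ, h4⟩ := Metric.uniformContinuous_iff.1 h1 η hη
  obtain ⟨x, y, N, -, hxy, hN⟩ := hs δ hδ
  have h5 := h4 ((dist_le_distT2 x y).trans_lt hxy)
  have h6 : dist (φ (f^[N] x)) (φ (f^[N] y)) < η := by
    rw [hit, hit, dist_add_right]; exact h5
  have h7 := h3 h6
  rw [hsy, hsy] at h7
  have h8 := distT2_le_dist (f^[N] x) (f^[N] y)
  linarith

end

/-- **Proposition 6.1.** There exists an area-preserving, minimal, C^∞ pseudo-rotation f of 𝕋²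
with bounded mean motion and super-Liouvillean totally irrational rotation vector such that for
every ε > 0 there are points x, y with d(x,y) < ε and an iterate N with
d(f^N(x), f^N(y)) ≥ 1/1000; in particular f is regularly semi-conjugate to an irrational
translation but not topologically conjugate to any translation. -/
theorem exists_nonlinearizable_minimal_pseudo_rotation :
    ∃ (f : T2 → T2) (F : R2 → R2) (ω : R2) (κ : ℝ),
      IsotopicToId f ∧ IsCrDiffeo ⊤ f ∧
      MeasurePreserving f (volume : Measure T2) volume ∧
      MinimalMap f ∧
      IsLift F f ∧ rotSet F = {ω} ∧
      BoundedMeanMotion F ω κ ∧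
      TotallyIrrationalVec ω ∧ SuperLiouville ω ∧
      (∀ ε : ℝ, 0 < ε → ∃ (x y : T2) (N : ℕ), 0 < N ∧ distT2 x y < ε ∧
        1 / 1000 ≤ distT2 (f^[N] x) (f^[N] y)) ∧
      RegSemiConj f (pr2 ω) ∧
      ¬ TopLinearizable f := by
  obtain ⟨S, M, h0, hS⟩ := exists_seq
  have h : Sq S M := ⟨h0, fun n => (hS n).1, fun n => (hS n).2.1, fun n => (hS n).2.2⟩
  obtain ⟨F, hFs, hFe, hFt, hFu⟩ := h.exists_F
  obtain ⟨F', hFs', hFe', hFt', hFu'⟩ := h.exists_F'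
  obtain ⟨K, hKc, hKe, hKu, hKt, hK2⟩ := h.exists_K
  obtain ⟨ω, hωt, hω⟩ := h.exists_w
  have hFc := hFs.continuous
  have hFc' := hFs'.continuous
  have i1 : ∀ z, F (F' z) = z := inv_lim hFc hFu hFt' fun n z => G_G' (h.inv n) z
  have i2 : ∀ z, F' (F z) = z := inv_lim hFc' hFu' hFt fun n z => G'_G (h.inv n) z
  have hl := desc_lift hFe
  have hs := semi_lim h hKc hKu hKt hFt hωt
  have hb := bmm hs hK2
  have hd := fun (τ : R2) (δ : ℝ) (hδ : 0 < δ) => h.w_dense hω τ hδ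
  have hirr := totIrr hd
  have hsens := h.sens hFc hFe hFu
  let e : R2 ≃ₜ R2 := ⟨⟨F, F', i2, i1⟩, hFc, hFc'⟩
  refine ⟨desc F, F, ω, 8, ⟨desc_homeo hFe hFe' hFc hFc' i2 i1, F, e.isHomeomorph, hl, hFe⟩,
    ⟨F, F', hl, i2, i1, hFs, hFs'⟩, ?_, h.minimal hFc hFe hFu, hl, rot_eq hb, ?_, hirr,
    h.liouville hirr hω, hsens, ⟨desc K, desc_cont hKe hKc, semi_surj hKc hKe hs hd,
      ⟨K, hKc, desc_lift hKe, hKe⟩, ?_⟩, not_lin hsens⟩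
  · refine mp_limit (desc_cont hFe hFc) (fun n => G_mp (h.inv n))
      (fun n => desc_cont (G_equiv (h.inv n)) (G_smooth (h.inv n)).continuous) ?_
    intro x
    obtain ⟨z, rfl⟩ := pr2_surj x
    simp only [← desc_lift (G_equiv (h.inv _)) z, ← hl z]
    exact (pr2_cont.tendsto _).comp (hFt z)
  · intro z n
    refine (enorm2_le _).trans ?_
    linarith [hb n z]
  · intro x
    obtain ⟨z, rfl⟩ := pr2_surj x
    rw [← hl z, ← desc_lift hKe, ← desc_lift hKe, hs, pr2_add]
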